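/- arXiv:1602.01749 — 2 statements merged into one kernel-verified Lean document; each statement's English description precedes it below -/
import Mathlib

section
/- Let σ ∈ PGL₂(ℚ) be given by σ(z) = (z − 1)/(3z + 1), an element of order 3. Then for every algebraic number α with α ∉ {0, 1, −1}, h(α) + h(σ(α)) + h(σ²(α)) ≥ log 5, with equality for α = i. -/
/- For a nonzero `f ∈ ℤ[X]`, the Mahler measure `M(f) = |a_n| ∏ max(|α_i|,1)`. -/
open Polynomial

noncomputable def mahlerMeasure (f : ℤ[X]) : ℝ :=
  |(f.leadingCoeff : ℝ)| *
    (((f.map (Int.castRingHom ℂ)).roots).map (fun z => max ‖z‖ 1)).prod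

/-- The primitive minimal polynomial over `ℤ` of an algebraic number. -/
noncomputable def intMinpoly (α : ℂ) : ℤ[X] :=
  (IsLocalization.integerNormalization (nonZeroDivisors ℤ) (minpoly ℚ α)).primPart

/-- The absolute logarithmic Weil height `h(α) = (1/n) log M(f)`. -/
noncomputable def height (α : ℂ) : ℝ :=
  Real.log (mahlerMeasure (intMinpoly α)) / (minpoly ℚ α).natDegree


lemma sq_aux {a b : ℝ} (h : a ^ 2 ≤ b ^ 2) (hb : 0 ≤ b) : a ≤ b :=
  (le_abs_self a).trans (abs_le_of_sq_le_sq h hb)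

lemma intMinpoly_map (β : ℂ) (hβ : IsAlgebraic ℚ β) :
    (intMinpoly β).IsPrimitive ∧ ∃ c : ℚ, c ≠ 0 ∧
      (intMinpoly β).map (algebraMap ℤ ℚ) = C c * minpoly ℚ β := by
  refine ⟨isPrimitive_primPart _, ?_⟩
  obtain ⟨b, hb, h⟩ := IsLocalization.integerNormalization_spec (nonZeroDivisors ℤ) (minpoly ℚ β)
  have hb0 : b ≠ 0 := nonZeroDivisors.ne_zero hb
  set F := IsLocalization.integerNormalization (nonZeroDivisors ℤ) (minpoly ℚ β) with hF
  have hmin : minpoly ℚ β ≠ 0 := minpoly.ne_zero hβ.isIntegral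
  have hF0 : F ≠ 0 := by
    intro h0
    rw [h0] at h
    simp at h
    rcases h with h | h
    · exact hb0 h
    · exact hmin h
  have hc : F.content ≠ 0 := by
    rwa [Ne, content_eq_zero_iff]
  have h1 : F.map (algebraMap ℤ ℚ) =
      C (F.content : ℚ) * (intMinpoly β).map (algebraMap ℤ ℚ) := by
    conv_lhs => rw [F.eq_C_content_mul_primPart]
    simp [intMinpoly, hF]
  have hcQ : (F.content : ℚ) ≠ 0 := by exact_mod_cast hc
  refine ⟨(F.content : ℚ)⁻¹ * b, mul_ne_zero (inv_ne_zero hcQ) (by exact_mod_cast hb0), ?_⟩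
  have h2 : (b : ℤ) • minpoly ℚ β = C (b : ℚ) * minpoly ℚ β := by
    rw [zsmul_eq_mul]; simp
  rw [C_mul, mul_assoc, ← h2, ← h, h1, ← mul_assoc, ← C_mul, inv_mul_cancel₀ hcQ, C_1, one_mul]

lemma intMinpoly_roots (β : ℂ) (hβ : IsAlgebraic ℚ β) :
    ((intMinpoly β).map (Int.castRingHom ℂ)).roots = (minpoly ℚ β).aroots ℂ := by
  obtain ⟨-, c, hc, h⟩ := intMinpoly_map β hβ
  have h1 : (intMinpoly β).map (Int.castRingHom ℂ) =
      ((intMinpoly β).map (algebraMap ℤ ℚ)).map (algebraMap ℚ ℂ) := by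
    rw [Polynomial.map_map]; congr 1
  rw [h1, h, Polynomial.map_mul, Polynomial.map_C, roots_C_mul]
  simpa using hc

lemma multiset_prod_inv_aux (s : Multiset ℂ) (h : ∀ z ∈ s, z ≠ 0) :
    (s.map (fun z => max ‖z‖ 1)).prod
      = ‖s.prod‖ * (s.map (fun z => max 1 ‖z⁻¹‖)).prod := by
  induction s using Multiset.induction with
  | empty => simp
  | cons a s ih =>
    have ha : a ≠ 0 := h a (by simp)
    have ha' : ‖a‖ ≠ 0 := by simpa using ha
    rw [Multiset.map_cons, Multiset.prod_cons, ih (fun z hz => h z (by simp [hz])),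
      Multiset.map_cons, Multiset.prod_cons, Multiset.prod_cons, norm_mul]
    have : max ‖a‖ 1 = ‖a‖ * max 1 ‖a⁻¹‖ := by
      rw [mul_max_of_nonneg _ _ (norm_nonneg _), norm_inv, mul_inv_cancel₀ ha', mul_one]
    rw [this]; ring

lemma mahler_lower (β : ℂ) (hβ : IsAlgebraic ℚ β) (h0 : β ≠ 0) :
    (((minpoly ℚ β).aroots ℂ).map (fun z => max 1 ‖z⁻¹‖)).prod
      ≤ _root_.mahlerMeasure (intMinpoly β) := by
  obtain ⟨hprim, c, hc, h⟩ := intMinpoly_map β hβ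
  have hr := intMinpoly_roots β hβ
  have hcoe : (intMinpoly β).coeff 0 ≠ 0 := by
    intro hz
    have h1 := congrArg (fun p => p.coeff 0) h
    simp only [coeff_map, hz, coeff_C_mul, map_zero] at h1
    have h2 := minpoly.coeff_zero_ne_zero hβ.isIntegral h0
    exact (mul_ne_zero hc h2) h1.symm
  have hinj : Function.Injective (Int.castRingHom ℂ) := RingHom.injective_int _
  have hsp := (IsAlgClosed.splits
    ((intMinpoly β).map (Int.castRingHom ℂ))).coeff_zero_eq_leadingCoeff_mul_prod_roots
  rw [leadingCoeff_map_of_injective hinj, coeff_map, hr] at hsp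
  have hne : ∀ z ∈ (minpoly ℚ β).aroots ℂ, z ≠ 0 := by
    intro z hz hz0
    have : ((minpoly ℚ β).aroots ℂ).prod = 0 := Multiset.prod_eq_zero (hz0 ▸ hz)
    rw [this, mul_zero] at hsp
    exact hcoe (by simpa using hsp)
  have hn := congrArg norm hsp
  simp only [norm_mul, norm_pow, norm_neg, norm_one, one_pow, one_mul, eq_intCast,
    Complex.norm_intCast] at hn
  have h1 : (1 : ℝ) ≤ |((intMinpoly β).coeff 0 : ℝ)| := by
    exact_mod_cast Int.one_le_abs hcoe
  unfold _root_.mahlerMeasure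
  rw [hr, multiset_prod_inv_aux _ hne, ← mul_assoc, ← hn]
  apply le_mul_of_one_le_left _ h1
  apply Multiset.prod_nonneg
  intro a ha
  obtain ⟨z, -, rfl⟩ := Multiset.mem_map.1 ha
  positivity

lemma height_nonneg' (β : ℂ) : 0 ≤ height β := by
  unfold height
  apply div_nonneg _ (Nat.cast_nonneg _)
  unfold _root_.mahlerMeasure
  by_cases hl : (intMinpoly β).leadingCoeff = 0
  · simp [hl]
  apply Real.log_nonneg
  have h1 : (1 : ℝ) ≤ |((intMinpoly β).leadingCoeff : ℝ)| := by
    exact_mod_cast Int.one_le_abs hl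
  apply one_le_mul_of_one_le_of_one_le h1
  apply Multiset.one_le_prod
  intro a ha
  obtain ⟨z, -, rfl⟩ := Multiset.mem_map.1 ha
  exact le_max_right _ _

lemma height_lower {K : Type*} [Field K] [NumberField K] (ι : K →+* ℂ) (x : K) (hx : x ≠ 0)
    (hinj : Function.Injective (fun φ : K →+* ℂ => φ x)) :
    (∑ φ : K →+* ℂ, Real.log (max 1 ‖(φ x)⁻¹‖)) / (Fintype.card (K →+* ℂ)) ≤ height (ι x) := by
  classical
  have hint : IsIntegral ℚ x := Algebra.IsIntegral.isIntegral x
  have hmin : minpoly ℚ (ι x) = minpoly ℚ x :=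
    minpoly.algHom_eq (RingHom.toRatAlgHom ι) ι.injective x
  have halg : IsAlgebraic ℚ (ι x) := (hint.map (RingHom.toRatAlgHom ι)).isAlgebraic
  have hι0 : ι x ≠ 0 := by simpa using hx
  have hroots : (minpoly ℚ x).aroots ℂ =
      (Finset.univ : Finset (K →+* ℂ)).val.map (fun φ => φ x) := by
    have hnd : ((minpoly ℚ x).aroots ℂ).Nodup :=
      nodup_roots (Separable.map (minpoly.irreducible hint).separable)
    have hnd2 : ((Finset.univ : Finset (K →+* ℂ)).val.map (fun φ => φ x)).Nodup :=
      Multiset.Nodup.map hinj Finset.univ.nodup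
    rw [Multiset.Nodup.ext hnd hnd2]
    intro z
    have := NumberField.Embeddings.range_eval_eq_rootSet_minpoly K ℂ x
    have h2 := Set.ext_iff.1 this z
    rw [mem_rootSet'] at h2
    rw [mem_aroots', ← h2]
    simp
  have hcard : (minpoly ℚ x).natDegree = Fintype.card (K →+* ℂ) := by
    have h1 := congrArg Multiset.card hroots
    rw [Multiset.card_map] at h1
    have h3 := (IsAlgClosed.splits
      ((minpoly ℚ x).map (algebraMap ℚ ℂ))).natDegree_eq_card_roots
    rw [natDegree_map] at h3
    rw [h3]
    exact h1
  have hM := mahler_lower (ι x) halg hι0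
  rw [hmin, hroots, Multiset.map_map] at hM
  unfold height
  rw [hmin, hcard]
  gcongr
  rw [← Real.log_prod (fun φ _ => by positivity)]
  apply Real.log_le_log
  · apply Finset.prod_pos; intro φ _; positivity
  · exact hM

lemma key_ineq (z : ℂ) (h0 : z ≠ 0) (h1 : z ≠ 1) (h2 : z ≠ -1) :
    5 ≤ max 1 ‖z⁻¹‖ * max 1 ‖((z - 1) / (3 * z + 1))⁻¹‖ * max 1 ‖((z + 1) / (1 - 3 * z))⁻¹‖ := by
  obtain ⟨w, rfl⟩ : ∃ w : ℂ, z = w⁻¹ := ⟨z⁻¹, by simp⟩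
  have hw : w ≠ 0 := by simpa using h0
  have hw1 : 1 - w ≠ 0 := by
    intro h; apply h1; have : w = 1 := by linear_combination -h
    simp [this]
  have hw2 : 1 + w ≠ 0 := by
    intro h; apply h2; have : w = -1 := by linear_combination h
    rw [this]; norm_num
  have e1 : ((w⁻¹ - 1) / (3 * w⁻¹ + 1))⁻¹ = (3 + w) / (1 - w) := by
    rw [inv_div]; field_simp
  have e2 : ((w⁻¹ + 1) / (1 - 3 * w⁻¹))⁻¹ = (w - 3) / (1 + w) := by
    rw [inv_div]; field_simp
  rw [inv_inv, e1, e2, norm_div, norm_div]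
  have p1 : 0 < ‖1 - w‖ := norm_pos_iff.2 hw1
  have p2 : 0 < ‖1 + w‖ := norm_pos_iff.2 hw2
  set x := w.re
  set y := w.im
  have n0 : ‖w‖ ^ 2 = x ^ 2 + y ^ 2 := by rw [Complex.sq_norm, Complex.normSq_apply]; ring
  have n1 : ‖1 - w‖ ^ 2 = (1 - x) ^ 2 + y ^ 2 := by
    rw [Complex.sq_norm, Complex.normSq_apply]; simp; ring
  have n2 : ‖1 + w‖ ^ 2 = (1 + x) ^ 2 + y ^ 2 := by
    rw [Complex.sq_norm, Complex.normSq_apply]; simp; ring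
  have n3 : ‖3 + w‖ ^ 2 = (3 + x) ^ 2 + y ^ 2 := by
    rw [Complex.sq_norm, Complex.normSq_apply]; simp; ring
  have n4 : ‖w - 3‖ ^ 2 = (x - 3) ^ 2 + y ^ 2 := by
    rw [Complex.sq_norm, Complex.normSq_apply]; simp; ring
  have m1 := le_max_left 1 ‖w‖
  have m2 := le_max_right 1 ‖w‖
  have m3 := le_max_left 1 (‖3 + w‖ / ‖1 - w‖)
  have m4 := le_max_right 1 (‖3 + w‖ / ‖1 - w‖)
  have m5 := le_max_left 1 (‖w - 3‖ / ‖1 + w‖)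
  have m6 := le_max_right 1 (‖w - 3‖ / ‖1 + w‖)
  obtain ⟨s, hs⟩ : ∃ s, s = x ^ 2 + y ^ 2 := ⟨_, rfl⟩
  have hxs : x ^ 2 ≤ s := by rw [hs]; nlinarith [sq_nonneg y]
  have hs0 : 0 ≤ s := le_trans (sq_nonneg x) hxs
  by_cases c0 : s ≤ 1
  · have : 5 ≤ 1 * (‖3 + w‖ / ‖1 - w‖) * (‖w - 3‖ / ‖1 + w‖) := by
      rw [one_mul, div_mul_div_comm, le_div_iff₀ (mul_pos p1 p2)]
      apply sq_aux _ (by positivity)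
      rw [mul_pow, mul_pow, mul_pow, n1, n2, n3, n4]
      have : ((3 + x) ^ 2 + y ^ 2) * ((x - 3) ^ 2 + y ^ 2)
          - 5 ^ 2 * (((1 - x) ^ 2 + y ^ 2) * ((1 + x) ^ 2 + y ^ 2))
          = 56 + 32 * (2 * x ^ 2 - s) - 24 * s ^ 2 := by rw [hs]; ring
      nlinarith [sq_nonneg x]
    refine this.trans ?_
    gcongr
  by_cases c1 : x ≤ -1
  · have : 5 ≤ ‖w‖ * 1 * (‖w - 3‖ / ‖1 + w‖) := by
      rw [mul_one, ← mul_div_assoc, le_div_iff₀ p2]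
      apply sq_aux _ (by positivity)
      rw [mul_pow, mul_pow, n0, n2, n4]
      have : (x ^ 2 + y ^ 2) * ((x - 3) ^ 2 + y ^ 2) - 5 ^ 2 * ((1 + x) ^ 2 + y ^ 2)
          = (s - 5) ^ 2 + (-1 - x) * (6 * s + 50) := by rw [hs]; ring
      have : 0 ≤ (-1 - x) * (6 * s + 50) := mul_nonneg (by linarith) (by linarith)
      nlinarith [sq_nonneg (s - 5)]
    refine this.trans ?_
    gcongr
  by_cases c2 : 1 ≤ x
  · have : 5 ≤ ‖w‖ * (‖3 + w‖ / ‖1 - w‖) * 1 := by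
      rw [mul_one, ← mul_div_assoc, le_div_iff₀ p1]
      apply sq_aux _ (by positivity)
      rw [mul_pow, mul_pow, n0, n1, n3]
      have : (x ^ 2 + y ^ 2) * ((3 + x) ^ 2 + y ^ 2) - 5 ^ 2 * ((1 - x) ^ 2 + y ^ 2)
          = (s - 5) ^ 2 + (x - 1) * (6 * s + 50) := by rw [hs]; ring
      have : 0 ≤ (x - 1) * (6 * s + 50) := mul_nonneg (by linarith) (by linarith)
      nlinarith [sq_nonneg (s - 5)]
    refine this.trans ?_
    gcongr
  · have : 5 ≤ ‖w‖ * (‖3 + w‖ / ‖1 - w‖) * (‖w - 3‖ / ‖1 + w‖) := by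
      rw [mul_assoc, div_mul_div_comm, ← mul_div_assoc, le_div_iff₀ (mul_pos p1 p2)]
      apply sq_aux _ (by positivity)
      rw [mul_pow, mul_pow, mul_pow, mul_pow, n0, n1, n2, n3, n4]
      have : (x ^ 2 + y ^ 2) * (((3 + x) ^ 2 + y ^ 2) * ((x - 3) ^ 2 + y ^ 2))
          - 5 ^ 2 * (((1 - x) ^ 2 + y ^ 2) * ((1 + x) ^ 2 + y ^ 2))
          = (1 - x ^ 2) * ((s - 1) * ((s - 3) ^ 2 + 16)) + x ^ 2 * ((s - 5) ^ 2 * (s + 3)) := by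
        rw [hs]; ring
      have hx1 : 0 ≤ 1 - x ^ 2 := by nlinarith
      have hs1 : 0 ≤ s - 1 := by linarith
      have : 0 ≤ (1 - x ^ 2) * ((s - 1) * ((s - 3) ^ 2 + 16)) := by positivity
      have : 0 ≤ x ^ 2 * ((s - 5) ^ 2 * (s + 3)) := by positivity
      linarith
    refine this.trans ?_
    gcongr

lemma height_rat_lower (q : ℚ) (hq : q ≠ 0) :
    Real.log (max 1 ‖((q : ℂ))⁻¹‖) ≤ height (q : ℂ) := by
  have h := height_lower (algebraMap ℚ ℂ) q hq (fun _ _ _ => Subsingleton.elim _ _)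
  rw [Fintype.sum_subsingleton _ (algebraMap ℚ ℂ), NumberField.Embeddings.card] at h
  simpa using h

lemma part_one (α : ℂ) (hα : IsAlgebraic ℚ α) (h0 : α ≠ 0) (h1 : α ≠ 1) (h2 : α ≠ -1) :
      height α + height ((α - 1) / (3 * α + 1)) + height ((α + 1) / (1 - 3 * α))
        ≥ Real.log 5 := by
  have h9 : Real.log 5 ≤ Real.log 3 + Real.log 3 := by
    rw [← Real.log_mul (by norm_num) (by norm_num)]
    exact Real.log_le_log (by norm_num) (by norm_num)
  have t1 : Real.log 3 ≤ height (1 / 3) := by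
    have := height_rat_lower (1 / 3) (by norm_num)
    norm_num at this ⊢
    exact this
  have t2 : Real.log 3 ≤ height (-1 / 3) := by
    have := height_rat_lower (-1 / 3) (by norm_num)
    norm_num at this ⊢
    exact this
  by_cases hp : α = -1 / 3
  · have e : (α + 1) / (1 - 3 * α) = 1 / 3 := by rw [hp]; norm_num
    rw [e, hp]
    linarith [height_nonneg' ((-1 / 3 - 1) / (3 * (-1 / 3) + 1))]
  by_cases hp' : α = 1 / 3
  · have e : (α - 1) / (3 * α + 1) = -1 / 3 := by rw [hp']; norm_num
    rw [e, hp']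
    linarith [height_nonneg' ((1 / 3 + 1) / (1 - 3 * (1 / 3)))]
  have hint := hα.isIntegral
  let K := IntermediateField.adjoin ℚ {α}
  have : FiniteDimensional ℚ K := IntermediateField.adjoin.finiteDimensional hint
  have : NumberField K := ⟨⟩
  let ι : K →+* ℂ := algebraMap K ℂ
  let a : K := IntermediateField.AdjoinSimple.gen ℚ α
  have hιa : ι a = α := IntermediateField.AdjoinSimple.algebraMap_gen ℚ α
  have a0 : a ≠ 0 := fun h => h0 (by rw [← hιa, h]; simp)
  have a1 : a ≠ 1 := fun h => h1 (by rw [← hιa, h]; simp)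
  have a2 : a ≠ -1 := fun h => h2 (by rw [← hιa, h]; simp)
  have a3 : 3 * a + 1 ≠ 0 := by
    intro h
    apply hp
    have h' := congrArg ι h
    simp only [map_add, map_mul, map_one, map_ofNat, map_zero, hιa] at h'
    linear_combination h' / 3
  have a4 : 1 - 3 * a ≠ 0 := by
    intro h
    apply hp'
    have h' := congrArg ι h
    simp only [map_sub, map_mul, map_one, map_ofNat, map_zero, hιa] at h'
    linear_combination -h' / 3
  have inj0 : Function.Injective (fun φ : K →+* ℂ => φ a) := by
    intro φ ψ h
    have : RingHom.toRatAlgHom φ = RingHom.toRatAlgHom ψ :=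
      (IntermediateField.adjoin.powerBasis hint).algHom_ext (by
        rw [IntermediateField.adjoin.powerBasis_gen]
        exact h)
    ext t
    exact DFunLike.congr_fun this t
  have ne3 : ∀ φ : K →+* ℂ, 3 * φ a + 1 ≠ 0 := by
    intro φ h
    apply a3
    apply φ.injective
    simpa only [map_add, map_sub, map_mul, map_one, map_ofNat, map_zero] using h
  have ne4 : ∀ φ : K →+* ℂ, 1 - 3 * φ a ≠ 0 := by
    intro φ h
    apply a4
    apply φ.injective
    simpa only [map_add, map_sub, map_mul, map_one, map_ofNat, map_zero] using h
  have inj1 : Function.Injective (fun φ : K →+* ℂ => φ ((a - 1) / (3 * a + 1))) := by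
    intro φ ψ h
    apply inj0
    simp only [map_div₀, map_add, map_sub, map_mul, map_one, map_ofNat] at h ⊢
    rw [div_eq_div_iff (ne3 φ) (ne3 ψ)] at h
    linear_combination h / 4
  have inj2 : Function.Injective (fun φ : K →+* ℂ => φ ((a + 1) / (1 - 3 * a))) := by
    intro φ ψ h
    apply inj0
    simp only [map_div₀, map_add, map_sub, map_mul, map_one, map_ofNat] at h ⊢
    rw [div_eq_div_iff (ne4 φ) (ne4 ψ)] at h
    linear_combination h / 4
  have L0 := height_lower ι a a0 inj0
  have L1 := height_lower ι ((a - 1) / (3 * a + 1)) (div_ne_zero (sub_ne_zero.2 a1) a3) inj1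
  have L2 := height_lower ι ((a + 1) / (1 - 3 * a))
    (div_ne_zero (fun h => a2 (eq_neg_of_add_eq_zero_left h)) a4) inj2
  simp only [map_div₀, map_add, map_sub, map_mul, map_one, map_ofNat, hιa] at L0 L1 L2
  refine ge_iff_le.2 (le_trans ?_ (add_le_add (add_le_add L0 L1) L2))
  have hc : (0 : ℝ) < Fintype.card (K →+* ℂ) := by
    exact_mod_cast Fintype.card_pos
  rw [← add_div, ← add_div, le_div_iff₀ hc, ← Finset.sum_add_distrib, ← Finset.sum_add_distrib]
  have : Real.log 5 * (Fintype.card (K →+* ℂ)) = ∑ φ : K →+* ℂ, Real.log 5 := by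
    rw [Finset.sum_const, nsmul_eq_mul, mul_comm]; rfl
  rw [this]
  apply Finset.sum_le_sum
  intro φ _
  rw [← Real.log_mul (by positivity) (by positivity), ← Real.log_mul (by positivity) (by positivity)]
  apply Real.log_le_log (by norm_num)
  apply key_ineq
  · intro h; exact a0 (φ.injective (by simpa using h))
  · intro h; exact a1 (φ.injective (by simpa using h))
  · intro h; exact a2 (φ.injective (by simpa using h))

lemma height_quad (a b c : ℤ) (ha : 0 < a)
    (hprim : (C a * X ^ 2 + C b * X + C c : ℤ[X]).IsPrimitive) (x : ℂ)
    (hx : x.im ≠ 0) (hn : ‖x‖ ≤ 1) (hr : a * x ^ 2 + b * x + c = 0) :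
    height x = Real.log a / 2 := by
  have haQ : (a : ℚ) ≠ 0 := by exact_mod_cast ha.ne'
  have haC : (a : ℂ) ≠ 0 := by exact_mod_cast ha.ne'
  set q : ℚ[X] := X ^ 2 + (C ((b : ℚ) / a) * X + C ((c : ℚ) / a)) with hq
  have hlow : (C ((b : ℚ) / a) * X + C ((c : ℚ) / a)).degree < 2 :=
    lt_of_le_of_lt degree_linear_le (by norm_num)
  have hmon : q.Monic := monic_X_pow_add (n := 2) (by exact_mod_cast hlow)
  have hdeg : q.degree = 2 := by
    rw [hq, degree_add_eq_left_of_degree_lt (by rw [degree_X_pow]; exact_mod_cast hlow),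
      degree_X_pow]; rfl
  have hnat : q.natDegree = 2 := natDegree_eq_of_degree_eq_some hdeg
  have hae : aeval x q = 0 := by
    simp [hq]
    field_simp
    linear_combination hr
  have hmin : q = minpoly ℚ x := by
    apply minpoly.unique' _ _ hmon hae
    intro r hrd
    rw [hdeg] at hrd
    by_cases h0 : aeval x r = 0
    · left
      have hr1 : r.degree ≤ 1 := by
        exact Order.le_of_lt_succ (by exact_mod_cast hrd)
      rw [eq_X_add_C_of_degree_le_one hr1] at h0 ⊢
      simp at h0
      have him := congrArg Complex.im h0
      have hre := congrArg Complex.re h0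
      simp at him hre
      have h1 : r.coeff 1 = 0 := him.resolve_right hx
      rw [h1] at hre
      simp at hre
      simp [h1, hre]
    · exact Or.inr h0
  have halg : IsAlgebraic ℚ x := ⟨q, hmon.ne_zero, hae⟩
  obtain ⟨hfp, k, hk, hf⟩ := intMinpoly_map x halg
  set g : ℤ[X] := C a * X ^ 2 + C b * X + C c with hg
  have hgq : g.map (algebraMap ℤ ℚ) = C (a : ℚ) * q := by
    simp only [hg, hq, Polynomial.map_add, Polynomial.map_mul, Polynomial.map_pow, map_X,
      Polynomial.map_C, mul_add, ← mul_assoc, ← C_mul, mul_div_cancel₀ _ haQ, add_assoc]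
    rfl
  have hass : Associated (intMinpoly x) g := by
    apply associated_of_dvd_dvd
    · rw [hfp.dvd_iff_fraction_map_dvd_fraction_map ℚ, hf, hgq, ← hmin]
      rw [(isUnit_C.2 (isUnit_iff_ne_zero.2 hk)).mul_left_dvd]
      exact dvd_mul_left _ _
    · rw [hprim.dvd_iff_fraction_map_dvd_fraction_map ℚ, hf, hgq, ← hmin]
      rw [(isUnit_C.2 (isUnit_iff_ne_zero.2 haQ)).mul_left_dvd]
      exact dvd_mul_left _ _
  have hlead : g.leadingCoeff = a := leadingCoeff_quadratic ha.ne'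
  have hl : |((intMinpoly x).leadingCoeff : ℝ)| = a := by
    obtain ⟨u, hu⟩ := hass
    have h1 := congrArg leadingCoeff hu
    rw [leadingCoeff_mul, hlead] at h1
    have h2 : IsUnit (u : ℤ[X]).leadingCoeff := by
      obtain ⟨r, hr, hr'⟩ := Polynomial.isUnit_iff.1 u.isUnit
      rw [← hr', leadingCoeff_C]; exact hr
    have h3 := congrArg abs h1
    rw [abs_mul, Int.isUnit_iff_abs_eq.1 h2, mul_one, abs_of_pos ha] at h3
    exact_mod_cast h3
  unfold height _root_.mahlerMeasure
  rw [intMinpoly_roots x halg, hl, ← hmin, hnat]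
  have hone : ((q.aroots ℂ).map (fun z => max ‖z‖ 1)).prod = 1 := by
    apply Multiset.prod_eq_one
    intro t ht
    obtain ⟨z, hz, rfl⟩ := Multiset.mem_map.1 ht
    apply max_eq_right
    have hz' := (mem_aroots.1 hz).2
    have hz2 : a * z ^ 2 + b * z + c = 0 := by
      simp [hq] at hz'
      field_simp at hz'
      linear_combination hz'
    have hr2 := congrArg (starRingEnd ℂ) hr
    simp at hr2
    set y := (starRingEnd ℂ) x with hy
    have hxy : x - y ≠ 0 := by
      intro h
      apply hx
      have := congrArg Complex.im h
      simp [hy] at this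
      exact this
    have hsum : a * (x + y) + b = 0 := by
      apply mul_left_cancel₀ hxy
      linear_combination hr - hr2
    have hfac : (z - x) * (z - y) = 0 := by
      apply mul_left_cancel₀ haC
      linear_combination hz2 - hr + (x - z) * hsum
    rcases mul_eq_zero.1 hfac with h | h
    · rw [sub_eq_zero.1 h]; exact hn
    · rw [sub_eq_zero.1 h, hy, Complex.norm_conj]; exact hn
  rw [hone, mul_one]
  norm_num

lemma prim_quad (a b c u v w : ℤ) (h : u * a + v * b + w * c = 1) :
    (C a * X ^ 2 + C b * X + C c : ℤ[X]).IsPrimitive := by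
  intro r hr
  rw [C_dvd_iff_dvd_coeff] at hr
  have h0 : r ∣ c := by simpa [coeff_X, coeff_C, -eq_intCast, -map_intCast] using hr 0
  have h1 : r ∣ b := by simpa [coeff_X, coeff_C, -eq_intCast, -map_intCast] using hr 1
  have h2 : r ∣ a := by simpa [coeff_X, coeff_C, -eq_intCast, -map_intCast] using hr 2
  apply isUnit_of_dvd_one
  rw [← h]
  exact dvd_add (dvd_add (h2.mul_left _) (h1.mul_left _)) (h0.mul_left _)

/-- Row 4 of Table 1: for `σ(z) = (z - 1)/(3z + 1)`, of order `3`, with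
`σ²(z) = (z + 1)/(1 - 3z)`: for every algebraic `α ∉ {0, 1, -1}` one has
`h(α) + h(σ(α)) + h(σ²(α)) ≥ log 5`, with equality at `α = i`. -/
theorem table1_row4 :
    (∀ α : ℂ, IsAlgebraic ℚ α → α ≠ 0 → α ≠ 1 → α ≠ -1 →
      height α + height ((α - 1) / (3 * α + 1)) + height ((α + 1) / (1 - 3 * α))
        ≥ Real.log 5) ∧
    height Complex.I + height ((Complex.I - 1) / (3 * Complex.I + 1)) +
        height ((Complex.I + 1) / (1 - 3 * Complex.I)) = Real.log 5 := by
  refine ⟨part_one, ?_⟩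
  have hI := Complex.I_sq
  have d1 : (3 * Complex.I + 1) ≠ 0 := by
    intro h; have := congrArg Complex.re h; simp at this
  have d2 : (1 - 3 * Complex.I) ≠ 0 := by
    intro h; have := congrArg Complex.re h; simp at this
  have e1 : (Complex.I - 1) / (3 * Complex.I + 1) = ⟨1 / 5, 2 / 5⟩ := by
    rw [div_eq_iff d1]
    apply Complex.ext <;> simp <;> norm_num
  have e2 : (Complex.I + 1) / (1 - 3 * Complex.I) = ⟨-1 / 5, 2 / 5⟩ := by
    rw [div_eq_iff d2]
    apply Complex.ext <;> simp <;> norm_num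
  have nrm : ∀ x : ℂ, Complex.normSq x ≤ 1 → ‖x‖ ≤ 1 := by
    intro x h
    rw [← Complex.sq_norm] at h
    exact (sq_le_one_iff₀ (norm_nonneg x)).1 h
  have H0 : height Complex.I = Real.log ((1 : ℤ) : ℝ) / 2 := by
    apply height_quad 1 0 1 (by norm_num) (prim_quad 1 0 1 1 0 0 (by norm_num))
    · simp
    · simp
    · simp
  have H1 : height ⟨1 / 5, 2 / 5⟩ = Real.log ((5 : ℤ) : ℝ) / 2 := by
    apply height_quad 5 (-2) 1 (by norm_num) (prim_quad 5 (-2) 1 0 0 1 (by norm_num))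
    · simp
    · apply nrm; rw [Complex.normSq_apply]; norm_num
    · apply Complex.ext <;> simp [pow_two] <;> norm_num
  have H2 : height ⟨-1 / 5, 2 / 5⟩ = Real.log ((5 : ℤ) : ℝ) / 2 := by
    apply height_quad 5 2 1 (by norm_num) (prim_quad 5 2 1 0 0 1 (by norm_num))
    · simp
    · apply nrm; rw [Complex.normSq_apply]; norm_num
    · apply Complex.ext <;> simp [pow_two] <;> norm_num
  rw [e1, e2, H0, H1, H2]
  norm_num
end

section
/- Let p and q be coprime integers with q > 0 and p ≠ 0, and let σ ∈ PGL₂(ℚ) be given by σ(z) = (qz + p)/(pz − q) (an involution interchanging i and −i). Then for every algebraic number α with α ∉ {i, −i}, h(α) + h(σ(α)) ≥ log((|p| + q)/2). Moreover, if p + q is even, then equality holds for α = 1 and for α = −1. -/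
/- For a nonzero `f ∈ ℤ[X]`, the Mahler measure `M(f) = |a_n| ∏ max(|α_i|,1)`. -/
open Polynomial

theorem quad_concave (A B G l u x : ℝ) (hG : 0 ≤ G) (hl : l ≤ x) (hu : x ≤ u)
    (h1 : 0 ≤ A + B * l - G * l ^ 2) (h2 : 0 ≤ A + B * u - G * u ^ 2) :
    0 ≤ A + B * x - G * x ^ 2 := by
  rcases eq_or_lt_of_le (hl.trans hu) with h | h
  · have : x = l := le_antisymm (h ▸ hu) hl
    rw [this]; exact h1
  · have key : (A + B * x - G * x ^ 2) * (u - l) = (A + B * l - G * l ^ 2) * (u - x)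
        + (A + B * u - G * u ^ 2) * (x - l) + G * ((x - l) * (u - x)) * (u - l) := by ring
    have : 0 ≤ (A + B * x - G * x ^ 2) * (u - l) := by
      rw [key]
      have := sub_nonneg.2 hl
      have := sub_nonneg.2 hu
      have := sub_nonneg.2 h.le
      positivity
    exact nonneg_of_mul_nonneg_left this (sub_pos.2 h)

theorem arch_real_sq (a b x r : ℝ) (ha : 0 < a) (hb : 0 < b) (hx : 0 ≤ x) (hxr : x ≤ r)
    (hr : r ≤ 1) :
    (a + b) ^ 2 * ((1 - r ^ 2) ^ 2 / 4 + x ^ 2) ≤ b ^ 2 * r ^ 2 + a ^ 2 + 2 * a * b * x ∨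
    (a + b) ^ 2 * ((1 - r ^ 2) ^ 2 / 4 + x ^ 2) ≤ a ^ 2 * r ^ 2 + b ^ 2 - 2 * a * b * x := by
  have hr0 : 0 ≤ r := hx.trans hxr
  have hr2 : r ^ 2 ≤ 1 := by nlinarith
  have hab : 0 < a * b := mul_pos ha hb
  -- reduction to the concave form
  have red1 : ∀ l u, l ≤ x → x ≤ u →
      0 ≤ (b ^ 2 * r ^ 2 + a ^ 2 - (a + b) ^ 2 * (1 - r ^ 2) ^ 2 / 4) + (2 * a * b) * l
        - (a + b) ^ 2 * l ^ 2 →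
      0 ≤ (b ^ 2 * r ^ 2 + a ^ 2 - (a + b) ^ 2 * (1 - r ^ 2) ^ 2 / 4) + (2 * a * b) * u
        - (a + b) ^ 2 * u ^ 2 →
      (a + b) ^ 2 * ((1 - r ^ 2) ^ 2 / 4 + x ^ 2) ≤ b ^ 2 * r ^ 2 + a ^ 2 + 2 * a * b * x := by
    intro l u hl hu h1 h2
    have := quad_concave _ _ _ l u x (sq_nonneg (a + b)) hl hu h1 h2
    linarith
  have red2 : ∀ l u, l ≤ x → x ≤ u →
      0 ≤ (a ^ 2 * r ^ 2 + b ^ 2 - (a + b) ^ 2 * (1 - r ^ 2) ^ 2 / 4) + (-(2 * a * b)) * l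
        - (a + b) ^ 2 * l ^ 2 →
      0 ≤ (a ^ 2 * r ^ 2 + b ^ 2 - (a + b) ^ 2 * (1 - r ^ 2) ^ 2 / 4) + (-(2 * a * b)) * u
        - (a + b) ^ 2 * u ^ 2 →
      (a + b) ^ 2 * ((1 - r ^ 2) ^ 2 / 4 + x ^ 2) ≤ a ^ 2 * r ^ 2 + b ^ 2 - 2 * a * b * x := by
    intro l u hl hu h1 h2
    have := quad_concave _ _ _ l u x (sq_nonneg (a + b)) hl hu h1 h2
    linarith
  -- endpoint r for the first
  have endA : (b - a) ≤ (a + b) * r →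
      0 ≤ (b ^ 2 * r ^ 2 + a ^ 2 - (a + b) ^ 2 * (1 - r ^ 2) ^ 2 / 4) + (2 * a * b) * r
        - (a + b) ^ 2 * r ^ 2 := by
    intro h
    have e : (b ^ 2 * r ^ 2 + a ^ 2 - (a + b) ^ 2 * (1 - r ^ 2) ^ 2 / 4) + (2 * a * b) * r
        - (a + b) ^ 2 * r ^ 2 = ((1 - r) * ((a + b) * r - (b - a))) *
          (2 * (b * r + a) + (a + b) * (1 + r ^ 2)) / 4 := by ring
    rw [e]
    have := sub_nonneg.2 h
    have := sub_nonneg.2 hr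
    positivity
  have zero_end : ∀ c d : ℝ, 0 < c → c ≤ d →
      0 ≤ c ^ 2 * r ^ 2 + d ^ 2 - (c + d) ^ 2 * (1 - r ^ 2) ^ 2 / 4 := by
    intro c d hc hcd
    have h1 : (1 - r ^ 2) ^ 2 ≤ 1 := by nlinarith [sq_nonneg r]
    have h2 : (c + d) ^ 2 ≤ 4 * d ^ 2 := by nlinarith
    have h3 : (c + d) ^ 2 * (1 - r ^ 2) ^ 2 ≤ 4 * d ^ 2 * 1 :=
      mul_le_mul h2 h1 (sq_nonneg _) (by positivity)
    have : 0 ≤ c ^ 2 * r ^ 2 := by positivity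
    linarith
  rcases le_or_gt b a with hba | hba
  · left
    refine red1 0 r hx hxr ?_ (endA (by nlinarith [mul_nonneg (add_pos ha hb).le hr0]))
    have := zero_end b a hb hba
    nlinarith
  · set x0 : ℝ := (b ^ 2 - a ^ 2) * (1 - r ^ 2) / (4 * (a * b)) with hx0
    have hx0e : x0 * (4 * (a * b)) = (b ^ 2 - a ^ 2) * (1 - r ^ 2) := by
      rw [hx0]; field_simp
    -- x0 ≤ r iff  r ≥ r0
    have fac : (r - x0) * (4 * (a * b)) = ((a + b) * r - (b - a)) * ((b - a) * r + (a + b)) := by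
      rw [sub_mul, hx0e]; ring
    have hpos : 0 < (b - a) * r + (a + b) := by nlinarith
    have mid : b - a ≤ (a + b) * r → 0 ≤ (a ^ 2 + b ^ 2) * (1 + r ^ 2) / 2
        - (a + b) ^ 2 * (1 - r ^ 2) ^ 2 / 4 - (a + b) ^ 2 * x0 ^ 2 := by
      intro h
      have h1 : (a + b) ^ 2 * (1 - r ^ 2) ≤ 4 * (a * b) := by
        have : (b - a) ^ 2 ≤ ((a + b) * r) ^ 2 := by
          apply pow_le_pow_left₀ (by linarith) h
        nlinarith
      have h2 : 2 * (a ^ 2 + b ^ 2) ≤ (a + b) ^ 2 * (1 + r ^ 2) := by nlinarith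
      have h3 : ((a + b) ^ 2 * (1 - r ^ 2)) ^ 2 ≤ (4 * (a * b)) ^ 2 :=
        pow_le_pow_left₀ (by have := sub_nonneg.2 hr2; positivity) h1 2
      have hx0' : x0 ^ 2 * (16 * (a * b) ^ 2) = (b ^ 2 - a ^ 2) ^ 2 * (1 - r ^ 2) ^ 2 := by
        have : (x0 * (4 * (a * b))) ^ 2 = ((b ^ 2 - a ^ 2) * (1 - r ^ 2)) ^ 2 := by rw [hx0e]
        linarith
      have e : ((a ^ 2 + b ^ 2) * (1 + r ^ 2) / 2
        - (a + b) ^ 2 * (1 - r ^ 2) ^ 2 / 4 - (a + b) ^ 2 * x0 ^ 2) * (16 * (a * b) ^ 2 * (a + b) ^ 2)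
        = (a ^ 2 + b ^ 2) * (8 * (a * b) ^ 2 * ((a + b) ^ 2 * (1 + r ^ 2))
          - (a ^ 2 + b ^ 2) * ((a + b) ^ 2 * (1 - r ^ 2)) ^ 2) := by
        linear_combination (-(a + b) ^ 4) * hx0'
      have h4 : 0 ≤ (8 * (a * b) ^ 2 * ((a + b) ^ 2 * (1 + r ^ 2))
          - (a ^ 2 + b ^ 2) * ((a + b) ^ 2 * (1 - r ^ 2)) ^ 2) := by
        have i1 := mul_le_mul_of_nonneg_left h2 (show 0 ≤ 8 * (a * b) ^ 2 by positivity)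
        have i2 := mul_le_mul_of_nonneg_left h3 (show 0 ≤ a ^ 2 + b ^ 2 by positivity)
        nlinarith
      refine nonneg_of_mul_nonneg_left (b := (16 * (a * b) ^ 2 * (a + b) ^ 2)) ?_ (by positivity)
      rw [e]; positivity
    have zero2 : 0 ≤ (a ^ 2 * r ^ 2 + b ^ 2 - (a + b) ^ 2 * (1 - r ^ 2) ^ 2 / 4)
        + (-(2 * a * b)) * 0 - (a + b) ^ 2 * 0 ^ 2 := by
      have := zero_end a b ha hba.le
      nlinarith
    rcases le_or_gt (b - a) ((a + b) * r) with h | h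
    · rcases le_or_gt x0 x with hxx | hxx
      · left
        refine red1 x0 r hxx hxr ?_ (endA h)
        have := mid h
        nlinarith
      · right
        refine red2 0 x0 hx hxx.le zero2 ?_
        have := mid h
        nlinarith
    · right
      refine red2 0 r hx hxr zero2 ?_
      have e : (a ^ 2 * r ^ 2 + b ^ 2 - (a + b) ^ 2 * (1 - r ^ 2) ^ 2 / 4) + (-(2 * a * b)) * r
        - (a + b) ^ 2 * r ^ 2 = ((1 + r) * ((b - a) - (a + b) * r)) *
          (2 * (b - a * r) + (a + b) * (1 + r ^ 2)) / 4 := by ring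
      rw [e]
      have := sub_pos.2 h
      have : 0 ≤ b - a * r := by nlinarith
      positivity

theorem arch_real (a b x s : ℝ) (ha : 0 < a) (hb : 0 < b) (hx : x ^ 2 ≤ s) (hs : s ≤ 1) :
    (a + b) ^ 2 / 4 * ((1 - s) ^ 2 + 4 * x ^ 2) ≤
      max (b ^ 2 * s + a ^ 2 + 2 * a * b * x) (a ^ 2 * s + b ^ 2 - 2 * a * b * x) := by
  have hs0 : 0 ≤ s := (sq_nonneg x).trans hx
  have hsq : Real.sqrt s ^ 2 = s := Real.sq_sqrt hs0
  have hr : Real.sqrt s ≤ 1 := Real.sqrt_le_one.mpr hs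
  have hxr : |x| ≤ Real.sqrt s := Real.abs_le_sqrt hx
  rw [le_max_iff]
  rcases le_total 0 x with h | h
  · rw [abs_of_nonneg h] at hxr
    have := arch_real_sq a b x _ ha hb h hxr hr
    rw [hsq] at this
    rcases this with h | h
    · left; linarith
    · right; linarith
  · rw [abs_of_nonpos h] at hxr
    have := arch_real_sq b a (-x) _ hb ha (by linarith) hxr hr
    rw [hsq] at this
    rcases this with h | h
    · right; linarith
    · left; linarith

theorem arch_real' (a b x s : ℝ) (ha : a ≠ 0) (hb : 0 < b) (hx : x ^ 2 ≤ s) (hs : s ≤ 1) :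
    (|a| + b) ^ 2 / 4 * ((1 - s) ^ 2 + 4 * x ^ 2) ≤
      max (b ^ 2 * s + a ^ 2 + 2 * a * b * x) (a ^ 2 * s + b ^ 2 - 2 * a * b * x) := by
  rcases lt_or_gt_of_ne ha with h | h
  · have := arch_real (-a) b (-x) s (by linarith) hb (by linarith) hs
    rw [abs_of_neg h]
    convert this using 2 <;> ring
  · rw [abs_of_pos h]; exact arch_real a b x s h hb hx hs

theorem arch_real2 (a b x s : ℝ) (ha : a ≠ 0) (hb : 0 < b) (hx : x ^ 2 ≤ s) :
    (|a| + b) ^ 2 / 4 * ((1 - s) ^ 2 + 4 * x ^ 2) ≤ max s 1 *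
      max (b ^ 2 * s + a ^ 2 + 2 * a * b * x) (a ^ 2 * s + b ^ 2 - 2 * a * b * x) := by
  rcases le_total s 1 with hs | hs
  · rw [max_eq_right hs, one_mul]; exact arch_real' a b x s ha hb hx hs
  · rw [max_eq_left hs]
    have hs0 : 0 < s := by linarith
    have := arch_real' a b (-(x / s)) (1 / s) ha hb
      (by rw [neg_sq, div_pow, div_le_div_iff₀ (by positivity) hs0]; nlinarith)
      (by rw [div_le_one hs0]; exact hs)
    have h2 := mul_le_mul_of_nonneg_left this (show 0 ≤ s * s by positivity)
    rw [mul_assoc s s (max _ _), mul_max_of_nonneg _ _ hs0.le] at h2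
    calc _ = s * s * ((|a| + b) ^ 2 / 4 * ((1 - 1 / s) ^ 2 + 4 * (-(x / s)) ^ 2)) := by
          field_simp; ring
      _ ≤ _ := h2
      _ = _ := by
          rw [max_comm]
          congr 2 <;> field_simp <;> ring

theorem arch_complex (p q : ℤ) (hq : 0 < q) (hp : p ≠ 0) (z : ℂ) :
    ((|p| : ℝ) + (q : ℝ)) / 2 * ‖z ^ 2 + 1‖ ≤
      max ‖z‖ 1 * max ‖(q : ℂ) - p * z‖ ‖(p : ℂ) + q * z‖ := by
  have h := arch_real2 (p : ℝ) (q : ℝ) z.re (z.re ^ 2 + z.im ^ 2) (by exact_mod_cast hp)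
    (by exact_mod_cast hq) (by nlinarith [sq_nonneg z.im])
  have sqmax : ∀ u v : ℝ, 0 ≤ u → 0 ≤ v → (max u v) ^ 2 = max (u ^ 2) (v ^ 2) := by
    intro u v hu hv
    rcases le_total u v with h | h
    · rw [max_eq_right h, max_eq_right (pow_le_pow_left₀ hu h 2)]
    · rw [max_eq_left h, max_eq_left (pow_le_pow_left₀ hv h 2)]
  refine le_of_sq_le_sq ?_ (by positivity) 
  rw [mul_pow, mul_pow, sqmax _ _ (norm_nonneg _) zero_le_one, sqmax _ _ (norm_nonneg _) (norm_nonneg _)]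
  have e1 : ‖z ^ 2 + 1‖ ^ 2 = (1 - (z.re ^ 2 + z.im ^ 2)) ^ 2 + 4 * z.re ^ 2 := by
    rw [Complex.sq_norm, Complex.normSq_apply, pow_two z]
    simp
    ring
  have e2 : ‖z‖ ^ 2 = z.re ^ 2 + z.im ^ 2 := by
    rw [Complex.sq_norm, Complex.normSq_apply]; ring
  have e3 : ‖(q : ℂ) - p * z‖ ^ 2 =
      p ^ 2 * (z.re ^ 2 + z.im ^ 2) + q ^ 2 - 2 * p * q * z.re := by
    rw [Complex.sq_norm, Complex.normSq_apply]
    simp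
    ring
  have e4 : ‖(p : ℂ) + q * z‖ ^ 2 =
      q ^ 2 * (z.re ^ 2 + z.im ^ 2) + p ^ 2 + 2 * p * q * z.re := by
    rw [Complex.sq_norm, Complex.normSq_apply]
    simp
    ring
  rw [e1, e2, e3, e4, max_comm (_ + _ - _) _, one_pow]
  calc _ = _ := by ring
    _ ≤ _ := h

noncomputable def twist (p q : ℤ) (n : ℕ) (f : ℤ[X]) : ℤ[X] :=
  ∑ k ∈ Finset.range (n + 1), C (f.coeff k) * (C q * X + C p) ^ k * (C p * X - C q) ^ (n - k)

theorem twist_eval₂ {R : Type*} [CommRing R] (p q : ℤ) (n : ℕ) (f : ℤ[X]) (x : R) :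
    (twist p q n f).eval₂ (Int.castRingHom R) x =
      ∑ k ∈ Finset.range (n + 1), (f.coeff k : R) * (q * x + p) ^ k * (p * x - q) ^ (n - k) := by
  simp only [twist, eval₂_finsetSum, eval₂_mul, eval₂_pow, eval₂_add, eval₂_sub, eval₂_C, eval₂_X]
  simp only [eq_intCast]

def gI : GaussianInt := ⟨0, 1⟩

theorem gI_mul : gI * gI = -1 := by decide

theorem star_gI : star gI = -gI := by decide

/-- the value of `f` at `i`, as a Gaussian integer -/
noncomputable def fI (f : ℤ[X]) : GaussianInt := f.eval₂ (Int.castRingHom GaussianInt) gI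

theorem twist_dvd (p q c : ℤ) (f g : ℤ[X]) (h : twist p q f.natDegree f = C c * g) :
    (c : GaussianInt) ∣ ((p : GaussianInt) - q * gI) ^ f.natDegree * fI f := by
  have h1 := congrArg (fun P : ℤ[X] => gI ^ f.natDegree * P.eval₂ (Int.castRingHom _) (-gI)) h
  simp only [twist_eval₂, eval₂_mul, eval₂_C] at h1
  refine ⟨gI ^ f.natDegree * g.eval₂ (Int.castRingHom _) (-gI), ?_⟩
  rw [eq_intCast] at h1
  rw [mul_left_comm, ← h1, fI, eval₂_eq_sum_range, Finset.mul_sum, Finset.mul_sum]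
  refine Finset.sum_congr rfl fun k hk => ?_
  have hk' : k ≤ f.natDegree := Nat.lt_succ_iff.1 (Finset.mem_range.1 hk)
  obtain ⟨m, hm⟩ := Nat.exists_eq_add_of_le hk'
  rw [hm, Nat.add_sub_cancel_left]
  have e1 : (p : GaussianInt) * -gI - q = -gI * (p - q * gI) := by
    linear_combination (-(q : GaussianInt)) * gI_mul
  have e2 : (q : GaussianInt) * -gI + p = (p - q * gI) := by ring
  have e3 : gI ^ m * (-gI) ^ m = 1 := by
    rw [← mul_pow, mul_neg, gI_mul]; simp
  rw [e1, e2, eq_intCast, mul_pow, pow_add, pow_add]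
  linear_combination (-((f.coeff k : GaussianInt) * (p - q * gI) ^ k * (p - q * gI) ^ m * gI ^ k)) * e3

theorem cop_conj (p q : ℤ) (h : IsCoprime p q) (hodd : ¬ 2 ∣ p + q) :
    IsCoprime ((p : GaussianInt) - q * gI) (p + q * gI) := by
  obtain ⟨u, v, huv⟩ := h
  obtain ⟨k, hk⟩ : ∃ k, p ^ 2 + q ^ 2 = 2 * k + 1 := by
    rcases Int.even_or_odd' p with ⟨a, ha | ha⟩ <;> rcases Int.even_or_odd' q with ⟨b, hb | hb⟩
    · exact absurd ⟨a + b, by rw [ha, hb]; ring⟩ hodd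
    · exact ⟨2 * a ^ 2 + 2 * b ^ 2 + 2 * b, by rw [ha, hb]; ring⟩
    · exact ⟨2 * a ^ 2 + 2 * b ^ 2 + 2 * a, by rw [ha, hb]; ring⟩
    · exact absurd ⟨a + b + 1, by rw [ha, hb]; ring⟩ hodd
  have huv' : (u : GaussianInt) * p + v * q = 1 := by exact_mod_cast congrArg (Int.cast : ℤ → GaussianInt) huv
  have hk' : (p : GaussianInt) ^ 2 + q ^ 2 = 2 * k + 1 := by exact_mod_cast congrArg (Int.cast : ℤ → GaussianInt) hk
  refine ⟨(p + q * gI) - k * (u + v * gI), - k * (u - v * gI), ?_⟩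
  linear_combination hk' - 2 * k * huv' + (-(q : GaussianInt) ^ 2 + 2 * k * v * q) * gI_mul

theorem dvd_of_cop {m x a b : GaussianInt} (h : IsCoprime a b) (n : ℕ) (h1 : m ∣ a ^ n * x)
    (h2 : m ∣ b ^ n * x) : m ∣ x := by
  obtain ⟨s, t, hst⟩ := (h.pow : IsCoprime (a ^ n) (b ^ n))
  have : x = s * (a ^ n * x) + t * (b ^ n * x) := by
    linear_combination (-x) * hst
  rw [this]
  exact dvd_add (dvd_mul_of_dvd_right h1 _) (dvd_mul_of_dvd_right h2 _)

theorem twist_dvd2 (p q c : ℤ) (f g : ℤ[X]) (h : twist p q f.natDegree f = C c * g) :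
    (c : GaussianInt) ∣ ((p : GaussianInt) - q * gI) ^ f.natDegree * ((fI f).norm : GaussianInt) ∧
    (c : GaussianInt) ∣ ((p : GaussianInt) + q * gI) ^ f.natDegree * ((fI f).norm : GaussianInt) := by
  have h1 := twist_dvd p q c f g h
  have h2 : (c : GaussianInt) ∣ ((p : GaussianInt) + q * gI) ^ f.natDegree * star (fI f) := by
    have := map_dvd (starRingEnd GaussianInt) h1
    simpa [starRingEnd_apply, star_gI, sub_eq_add_neg] using this
  rw [Zsqrtd.norm_eq_mul_conj]
  refine ⟨?_, ?_⟩
  · rw [← mul_assoc]; exact dvd_mul_of_dvd_left h1 _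
  · rw [mul_comm (fI f), ← mul_assoc]; exact dvd_mul_of_dvd_left h2 _

theorem dvd_norm_odd (p q c : ℤ) (f g : ℤ[X]) (hpq : IsCoprime p q) (hodd : ¬ 2 ∣ p + q)
    (h : twist p q f.natDegree f = C c * g) : c ∣ (fI f).norm := by
  obtain ⟨h1, h2⟩ := twist_dvd2 p q c f g h
  have := dvd_of_cop (cop_conj p q hpq hodd) _ h1 h2
  exact (Zsqrtd.intCast_dvd_intCast _ _).1 this

theorem twist_half (p q c D a b : ℤ) (f g : ℤ[X]) (hp : p ≠ 0) (ha : p + q = 2 * a)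
    (hb : p - q = 2 * b) (hD : p ^ 2 + q ^ 2 = 2 * D)
    (h : twist p q f.natDegree f = C c * g) :
    ∃ H : ℤ[X], C (D ^ f.natDegree) * f.comp (1 + C 2 * X) = C c * H := by
  set n := f.natDegree with hn
  have hdeg : g.natDegree ≤ n ∨ c = 0 := by
    by_cases hc : c = 0
    · exact Or.inr hc
    · left
      rw [← natDegree_C_mul (p := g) hc, ← h, twist]
      refine natDegree_sum_le_of_forall_le _ _ fun k hk => ?_
      have hk' : k ≤ n := Nat.lt_succ_iff.1 (Finset.mem_range.1 hk)
      have l1 : (C q * X + C p : ℤ[X]).natDegree ≤ 1 := natDegree_linear_le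
      have l2 : (C p * X - C q : ℤ[X]).natDegree ≤ 1 := by
        rw [sub_eq_add_neg, ← C_neg]; exact natDegree_linear_le
      calc _ ≤ (C (f.coeff k) * (C q * X + C p) ^ k : ℤ[X]).natDegree
              + ((C p * X - C q) ^ (n - k) : ℤ[X]).natDegree := natDegree_mul_le
        _ ≤ k * 1 + (n - k) * 1 := by
            refine add_le_add ?_ (natDegree_pow_le_of_le _ l2)
            exact (natDegree_C_mul_le _ _).trans (natDegree_pow_le_of_le _ l1)
        _ = n := by omega
  refine ⟨∑ k ∈ Finset.range (n + 1),
    C (g.coeff k) * (C a + C q * X) ^ k * (C b + C p * X) ^ (n - k), ?_⟩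
  have hY : (C b + C p * X : ℤ[X]) ≠ 0 := by
    intro h0
    have := congrArg (fun P : ℤ[X] => P.coeff 1) h0
    simp only [coeff_add, coeff_C_mul, coeff_X_one, coeff_C_succ, coeff_zero] at this
    exact hp (by linarith)
  apply mul_right_cancel₀ hY
  apply Polynomial.funext
  intro t
  by_cases hy : b + p * t = 0
  · simp [hy]
  simp only [eval_mul, eval_C, eval_comp, eval_add, eval_one, eval_X, eval_finsetSum, eval_pow]
  congr 1
  have hyQ : (b : ℚ) + p * t ≠ 0 := by exact_mod_cast hy
  have key := congrArg (fun P : ℤ[X] => P.eval₂ (Int.castRingHom ℚ)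
    (((a : ℚ) + q * t) / (b + p * t))) h
  simp only [twist_eval₂, eval₂_mul, eval₂_C] at key
  have haQ : (p : ℚ) + q = 2 * a := by exact_mod_cast ha
  have hbQ : (p : ℚ) - q = 2 * b := by exact_mod_cast hb
  have hDQ : (p : ℚ) ^ 2 + q ^ 2 = 2 * D := by exact_mod_cast hD
  obtain ⟨y, hyd⟩ : ∃ y : ℚ, y = (b : ℚ) + p * t := ⟨_, rfl⟩
  rw [← hyd] at hyQ key
  have x1 : (q : ℚ) * (((a : ℚ) + q * t) / y) + p = D * (1 + 2 * t) / y := by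
    field_simp
    rw [hyd]
    linear_combination -q / 2 * haQ - p / 2 * hbQ + (t + 1 / 2) * hDQ
  have x2 : (p : ℚ) * (((a : ℚ) + q * t) / y) - q = D / y := by
    field_simp
    rw [hyd]
    linear_combination -p / 2 * haQ + q / 2 * hbQ + (1 / 2) * hDQ
  rw [x1, x2] at key
  have key2 : y ^ n * ∑ k ∈ Finset.range (n + 1),
      (f.coeff k : ℚ) * (D * (1 + 2 * t) / y) ^ k * (D / y) ^ (n - k)
      = D ^ n * f.eval₂ (Int.castRingHom ℚ) (1 + 2 * t) := by
    rw [eval₂_eq_sum_range, ← hn, Finset.mul_sum, Finset.mul_sum]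
    refine Finset.sum_congr rfl fun k hk => ?_
    have hk' : k ≤ n := Nat.lt_succ_iff.1 (Finset.mem_range.1 hk)
    obtain ⟨m, hm⟩ := Nat.exists_eq_add_of_le hk'
    rw [hm, Nat.add_sub_cancel_left, eq_intCast]
    rw [div_pow, div_pow, mul_pow, pow_add, pow_add]
    field_simp
  have key3 : (c : ℚ) * (y ^ n *
      g.eval₂ (Int.castRingHom ℚ) (((a : ℚ) + q * t) / y)) =
      c * ∑ k ∈ Finset.range (n + 1), (g.coeff k : ℚ) * (a + q * t) ^ k * y ^ (n - k) := by
    rcases hdeg with hdeg | hc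
    · rw [eval₂_eq_sum_range' _ (Nat.lt_succ_of_le hdeg), Finset.mul_sum]
      congr 1
      refine Finset.sum_congr rfl fun k hk => ?_
      have hk' : k ≤ n := Nat.lt_succ_iff.1 (Finset.mem_range.1 hk)
      obtain ⟨m, hm⟩ := Nat.exists_eq_add_of_le hk'
      rw [hm, Nat.add_sub_cancel_left, eq_intCast]
      rw [div_pow, pow_add]
      field_simp
    · rw [hc]; simp
  rw [key, eq_intCast, mul_left_comm, key3] at key2
  have e : ((f.eval (1 + 2 * t) : ℤ) : ℚ) = f.eval₂ (Int.castRingHom ℚ) (1 + 2 * t) := by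
    have := (Polynomial.hom_eval₂ f (RingHom.id ℤ) (Int.castRingHom ℚ) (1 + 2 * t))
    simpa [eval₂_id] using this
  have : ((D ^ n * f.eval (1 + 2 * t) : ℤ) : ℚ) = ((c * ∑ k ∈ Finset.range (n + 1), g.coeff k * (a + q * t) ^ k * (b + p * t) ^ (n - k) : ℤ) : ℚ) := by
    push_cast
    rw [e, ← hyd]
    exact key2.symm
  exact_mod_cast this

/-- two-part -/
theorem two_part (e n : ℕ) (D : ℤ) (f H : ℤ[X]) (hD : ¬ 2 ∣ D)
    (h : C (D ^ n) * f.comp (1 + C 2 * X) = C (2 ^ e) * H) : (2 : ℤ) ^ e ∣ (fI f).norm := by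
  set T := f.comp (1 + X) with hT
  have hfT : f.comp (1 + C 2 * X) = T.comp (C 2 * X) := by
    rw [hT, comp_assoc]; simp
  have hco : ∀ k, (2 : ℤ) ^ e ∣ 2 ^ k * T.coeff k := by
    intro k
    have h1 := congrArg (fun P : ℤ[X] => P.coeff k) h
    simp only [hfT, coeff_C_mul, comp_C_mul_X_coeff] at h1
    have h2 : (2 : ℤ) ^ e ∣ D ^ n * (T.coeff k * 2 ^ k) := ⟨_, h1⟩
    have cop : IsCoprime ((2 : ℤ) ^ e) (D ^ n) :=
      IsCoprime.pow ((Int.prime_two.coprime_iff_not_dvd).2 hD)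
    rw [mul_comm]
    exact cop.dvd_of_dvd_mul_left h2
  have hfI : fI f = T.eval₂ (Int.castRingHom GaussianInt) (gI - 1) := by
    rw [hT, eval₂_comp]; simp [fI]
  have hdvd : (gI - 1) ^ e ∣ fI f := by
    rw [hfI, eval₂_eq_sum_range]
    refine Finset.dvd_sum fun k _ => ?_
    rcases le_total e k with hek | hek
    · exact dvd_mul_of_dvd_right (pow_dvd_pow _ hek) _
    · obtain ⟨m, rfl⟩ := Nat.exists_eq_add_of_le hek
      have h3 : (2 : ℤ) ^ m ∣ T.coeff k := by
        have := hco k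
        rw [pow_add] at this
        exact (mul_dvd_mul_iff_left (by positivity)).1 this
      rw [pow_add, mul_comm]
      refine mul_dvd_mul ?_ dvd_rfl
      obtain ⟨w, hw⟩ := h3
      have : (gI - 1) ∣ (2 : GaussianInt) := ⟨⟨-1, -1⟩, by decide⟩
      rw [hw, eq_intCast]; push_cast
      exact dvd_mul_of_dvd_left (pow_dvd_pow_of_dvd this m) _
  have := map_dvd (Zsqrtd.normMonoidHom : GaussianInt →* ℤ) hdvd
  rw [map_pow] at this
  exact this

theorem dvd_norm_even (p q c : ℤ) (hc : c ≠ 0) (f g : ℤ[X]) (hp : p ≠ 0) (hpq : IsCoprime p q)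
    (heven : 2 ∣ p + q) (h : twist p q f.natDegree f = C c * g) : c ∣ (fI f).norm := by
  obtain ⟨a, ha⟩ := heven
  set b := a - q with hbdef
  have hb : p - q = 2 * b := by rw [hbdef]; linarith
  have hpab : p = a + b := by linarith
  have hqab : q = a - b := by linarith
  have hcop : IsCoprime a b := by
    obtain ⟨u, v, huv⟩ := hpq
    exact ⟨u + v, u - v, by rw [← huv, hpab, hqab]; ring⟩
  have hsum : ¬ 2 ∣ b + a := by
    rintro ⟨k, hk⟩
    have h1 : (2 : ℤ) ∣ p := ⟨k, by linarith⟩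
    have h2 : (2 : ℤ) ∣ q := by
      have : q = 2 * a - p := by linarith
      rw [this]; exact dvd_sub (dvd_mul_right _ _) h1
    have := hpq.isUnit_of_dvd' h1 h2
    exact absurd this (by decide)
  have hD : p ^ 2 + q ^ 2 = 2 * (a ^ 2 + b ^ 2) := by rw [hpab, hqab]; ring
  have hDodd : ¬ 2 ∣ a ^ 2 + b ^ 2 := by
    intro h2
    apply hsum
    have : (2 : ℤ) ∣ (b + a) ^ 2 := by
      have e : (b + a) ^ 2 = (a ^ 2 + b ^ 2) + 2 * (a * b) := by ring
      rw [e]; exact dvd_add h2 (dvd_mul_right _ _)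
    exact Int.prime_two.dvd_of_dvd_pow this
  obtain ⟨m, hcm, hm⟩ := FiniteMultiplicity.exists_eq_pow_mul_and_not_dvd
    (Int.finiteMultiplicity_iff.2 ⟨by decide, hc⟩ : FiniteMultiplicity (2 : ℤ) c)
  generalize multiplicity 2 c = e at hcm
  have hcop2 : IsCoprime ((2 : ℤ) ^ e) m :=
    IsCoprime.pow_left ((Int.prime_two.coprime_iff_not_dvd).2 hm)
  have d1 : (2 : ℤ) ^ e ∣ (fI f).norm := by
    obtain ⟨H, hH⟩ := twist_half p q c _ a b f g hp ha hb hD h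
    refine two_part e f.natDegree _ f (C m * H) hDodd ?_
    rw [hH, hcm, C_mul]; ring
  have d2 : m ∣ (fI f).norm := by
    obtain ⟨h1, h2⟩ := twist_dvd2 p q c f g h
    have hmc : (m : GaussianInt) ∣ c := (Zsqrtd.intCast_dvd_intCast _ _).2 ⟨2 ^ e, by rw [hcm]; ring⟩
    have h1 := hmc.trans h1
    have h2 := hmc.trans h2
    have pg : (p : GaussianInt) = a + b := by exact_mod_cast congrArg (Int.cast : ℤ → GaussianInt) hpab
    have qg : (q : GaussianInt) = a - b := by exact_mod_cast congrArg (Int.cast : ℤ → GaussianInt) hqab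
    have cm2 : IsCoprime (m : GaussianInt) 2 := by
      have : IsCoprime m 2 := ((Int.prime_two.coprime_iff_not_dvd).2 hm).symm
      exact_mod_cast this.map (Int.castRingHom GaussianInt)
    have c1 : IsCoprime (m : GaussianInt) (1 - gI) := cm2.of_isCoprime_of_dvd_right ⟨1 + gI, by decide⟩
    have c2 : IsCoprime (m : GaussianInt) (1 + gI) := cm2.of_isCoprime_of_dvd_right ⟨1 - gI, by decide⟩
    have e1 : (p : GaussianInt) - q * gI = (1 - gI) * (a + b * gI) := by
      rw [pg, qg]; linear_combination (b : GaussianInt) * gI_mul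
    have e2 : (p : GaussianInt) + q * gI = (1 + gI) * (a - b * gI) := by
      rw [pg, qg]; linear_combination (b : GaussianInt) * gI_mul
    rw [e1, mul_pow, mul_assoc] at h1
    rw [e2, mul_pow, mul_assoc] at h2
    have h1 := c1.pow_right.dvd_of_dvd_mul_left h1
    have h2 := c2.pow_right.dvd_of_dvd_mul_left h2
    have := dvd_of_cop (cop_conj a b hcop (by rwa [add_comm])) _ h2 h1
    exact (Zsqrtd.intCast_dvd_intCast _ _).1 this
  rw [hcm]
  exact hcop2.mul_dvd d1 d2

theorem dvd_norm_all (p q c : ℤ) (hc : c ≠ 0) (f g : ℤ[X]) (hp : p ≠ 0) (hpq : IsCoprime p q)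
    (h : twist p q f.natDegree f = C c * g) : c ∣ (fI f).norm := by
  by_cases heven : 2 ∣ p + q
  · exact dvd_norm_even p q c hc f g hp hpq heven h
  · exact dvd_norm_odd p q c f g hpq heven h
theorem measure_eq (f : ℤ[X]) :
    _root_.mahlerMeasure f = (f.map (Int.castRingHom ℂ)).mahlerMeasure := by
  rw [Polynomial.mahlerMeasure_eq_leadingCoeff_mul_prod_roots, _root_.mahlerMeasure,
    leadingCoeff_map_of_injective (RingHom.injective_int _)]
  congr 1
  · rw [eq_intCast, Complex.norm_intCast]
  · simp only [max_comm]

theorem measure_C_mul (c : ℤ) (f : ℤ[X]) :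
    _root_.mahlerMeasure (C c * f) = |(c : ℝ)| * _root_.mahlerMeasure f := by
  rw [measure_eq, measure_eq, Polynomial.map_mul, Polynomial.mahlerMeasure_mul, map_C,
    Polynomial.mahlerMeasure_const, eq_intCast, Complex.norm_intCast]

theorem measure_pos {f : ℤ[X]} (hf : f ≠ 0) : 0 < _root_.mahlerMeasure f := by
  rw [measure_eq]
  exact Polynomial.mahlerMeasure_pos_of_ne_zero
    ((Polynomial.map_ne_zero_iff (RingHom.injective_int _)).2 hf)

theorem mahler_linear (a b : ℂ) :
    (C a * X + C b : ℂ[X]).mahlerMeasure = max ‖a‖ ‖b‖ := by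
  by_cases ha : a = 0
  · simp [ha, Polynomial.mahlerMeasure_const]
  · have hd : (C a * X + C b : ℂ[X]).degree = 1 := degree_linear ha
    rw [Polynomial.mahlerMeasure_of_degree_eq_one hd]
    simp [coeff_C]

theorem intMinpoly_prim (α : ℂ) : (intMinpoly α).IsPrimitive := isPrimitive_primPart _

theorem intMinpoly_rel (α : ℂ) : ∃ r s : ℚ, r ≠ 0 ∧ s ≠ 0 ∧
    C r * (intMinpoly α).map (Int.castRingHom ℚ) = C s * minpoly ℚ α ∨ ¬ IsAlgebraic ℚ α := by
  by_cases hα : IsAlgebraic ℚ α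
  · have hm : minpoly ℚ α ≠ 0 := minpoly.ne_zero hα.isIntegral
    obtain ⟨b, hb, h⟩ := IsLocalization.integerNormalization_spec (nonZeroDivisors ℤ) (minpoly ℚ α)
    have h0 : IsLocalization.integerNormalization (nonZeroDivisors ℤ) (minpoly ℚ α) ≠ 0 := by
      rw [Ne, IsFractionRing.integerNormalization_eq_zero_iff]; exact hm
    refine ⟨((IsLocalization.integerNormalization (nonZeroDivisors ℤ) (minpoly ℚ α)).content : ℤ),
      (b : ℤ), Or.inl ⟨?_, ?_, ?_⟩⟩
    · rw [Int.cast_ne_zero, Ne, content_eq_zero_iff]; exact h0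
    · rw [Int.cast_ne_zero]; exact nonZeroDivisors.ne_zero hb
    · rw [eq_C_content_mul_primPart (IsLocalization.integerNormalization _ _)] at h
      rw [Polynomial.map_mul, map_C] at h
      rw [algebraMap_int_eq] at h
      rw [eq_intCast] at h
      rw [intMinpoly, h, ← smul_eq_C_mul, Int.cast_smul_eq_zsmul]
  · exact ⟨1, 1, Or.inr hα⟩

theorem intMinpoly_degree {α : ℂ} (hα : IsAlgebraic ℚ α) :
    (intMinpoly α).natDegree = (minpoly ℚ α).natDegree := by
  obtain ⟨r, s, h⟩ := intMinpoly_rel α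
  rcases h with ⟨hr, hs, h⟩ | h
  · have := congrArg natDegree h
    rwa [natDegree_C_mul hr, natDegree_C_mul hs,
      natDegree_map_eq_of_injective (RingHom.injective_int _)] at this
  · exact absurd hα h

theorem intMinpoly_root {α : ℂ} (hα : IsAlgebraic ℚ α) :
    (intMinpoly α).eval₂ (Int.castRingHom ℂ) α = 0 := by
  obtain ⟨r, s, h⟩ := intMinpoly_rel α
  rcases h with ⟨hr, hs, h⟩ | h
  · have := congrArg (aeval α) h
    rw [map_mul, map_mul, minpoly.aeval, mul_zero, aeval_C, mul_eq_zero] at this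
    rcases this with h1 | h1
    · simp [hr] at h1
    · rw [aeval_def, eval₂_map] at h1
      rw [← h1]; congr 1
  · exact absurd hα h

theorem intMinpoly_dvd {α : ℂ} (hα : IsAlgebraic ℚ α) (F : ℤ[X])
    (hF : F.eval₂ (Int.castRingHom ℂ) α = 0) : intMinpoly α ∣ F := by
  obtain ⟨r, s, h⟩ := intMinpoly_rel α
  rcases h with ⟨hr, hs, h⟩ | h
  · rw [IsPrimitive.Int.dvd_iff_map_cast_dvd_map_cast _ _ (intMinpoly_prim α)]
    have h1 : minpoly ℚ α ∣ F.map (Int.castRingHom ℚ) := by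
      apply minpoly.dvd
      rw [aeval_def, eval₂_map]
      rw [← hF]; congr 1
    refine dvd_trans ?_ h1
    refine (dvd_trans (dvd_mul_left _ (C r)) (h.dvd)).trans ?_
    refine ⟨C s⁻¹, ?_⟩
    rw [mul_comm (C s), mul_assoc, ← C_mul, mul_inv_cancel₀ hs, C_1, mul_one]
  · exact absurd hα h

theorem eq_C_mul_intMinpoly {α : ℂ} (hα : IsAlgebraic ℚ α) (F : ℤ[X]) (hF0 : F ≠ 0)
    (hF : F.eval₂ (Int.castRingHom ℂ) α = 0) (hd : F.natDegree ≤ (minpoly ℚ α).natDegree) :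
    ∃ c : ℤ, c ≠ 0 ∧ F = C c * intMinpoly α := by
  obtain ⟨w, hw⟩ := intMinpoly_dvd hα F hF
  have hw0 : w ≠ 0 := by rintro rfl; exact hF0 (by rw [hw, mul_zero])
  have hf0 : intMinpoly α ≠ 0 := primPart_ne_zero _
  have : w.natDegree = 0 := by
    rw [hw, natDegree_mul hf0 hw0, intMinpoly_degree hα] at hd
    omega
  rw [natDegree_eq_zero] at this
  obtain ⟨c, rfl⟩ := this
  exact ⟨c, by rintro rfl; exact hw0 C_0, by rw [hw, mul_comm]⟩

theorem height_rat (a b : ℤ) (hb : b ≠ 0) (hab : IsCoprime a b) :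
    height ((a : ℂ) / b) = Real.log (max |(a : ℝ)| |(b : ℝ)|) := by
  have hα' : ((a : ℂ) / b) = algebraMap ℚ ℂ ((a : ℚ) / b) := by simp
  have hα : IsAlgebraic ℚ ((a : ℂ) / b) := by rw [hα']; exact isAlgebraic_algebraMap _
  have hm : (minpoly ℚ ((a : ℂ) / b)).natDegree = 1 := by
    rw [hα', minpoly.eq_X_sub_C, natDegree_X_sub_C]
  have hbC : (b : ℂ) ≠ 0 := by exact_mod_cast hb
  have hF0 : (C b * X + C (-a) : ℤ[X]) ≠ 0 := by
    intro h
    have := congrArg (fun P : ℤ[X] => P.natDegree) h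
    simp only [natDegree_linear hb, natDegree_zero] at this
    omega
  obtain ⟨c, hc, h⟩ := eq_C_mul_intMinpoly hα (C b * X + C (-a)) hF0
    (by simp only [eval₂_add, eval₂_mul, eval₂_C, eval₂_X]; simp only [eq_intCast]; push_cast; field_simp; ring)
    (by rw [hm, natDegree_linear hb])
  have hcu : IsUnit c := by
    have h0 : c ∣ -a := by
      have := congrArg (fun P : ℤ[X] => P.coeff 0) h
      simp only [coeff_add, coeff_C_mul, coeff_X_zero, coeff_C_zero, mul_zero, zero_add] at this
      exact ⟨_, this⟩
    have h1 : c ∣ b := by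
      have := congrArg (fun P : ℤ[X] => P.coeff 1) h
      simp only [coeff_add, coeff_C_mul, coeff_X_one, coeff_C_succ, mul_one, add_zero] at this
      exact ⟨_, this⟩
    exact hab.isUnit_of_dvd' ((dvd_neg).1 h0) h1
  have hM := congrArg _root_.mahlerMeasure h
  rw [measure_C_mul] at hM
  have hc1 : |(c : ℝ)| = 1 := by
    rcases Int.isUnit_iff.1 hcu with rfl | rfl <;> simp
  rw [hc1, one_mul, measure_eq, Polynomial.map_add, Polynomial.map_mul, map_C, map_C, map_X,
    mahler_linear, eq_intCast, eq_intCast, Complex.norm_intCast, Complex.norm_intCast] at hM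
  rw [height, hm, ← hM, max_comm]
  simp

theorem height_int_zero : height 0 = 0 := by
  have := height_rat 0 1 one_ne_zero isCoprime_one_right
  simpa using this

/-- homogenised values as products over roots -/
theorem hom_prod (f : ℤ[X]) (x y : ℂ) :
    ∑ k ∈ Finset.range (f.natDegree + 1), (f.coeff k : ℂ) * x ^ k * y ^ (f.natDegree - k) =
      (f.leadingCoeff : ℂ) *
        (((f.map (Int.castRingHom ℂ)).roots).map (fun z => x - z * y)).prod := by
  have hinj : Function.Injective (Int.castRingHom ℂ) := RingHom.injective_int _
  have hs := (IsAlgClosed.splits (f.map (Int.castRingHom ℂ)))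
  have hcard : Multiset.card (f.map (Int.castRingHom ℂ)).roots = f.natDegree := by
    rw [← hs.natDegree_eq_card_roots, natDegree_map_eq_of_injective hinj]
  by_cases hy : y = 0
  · subst hy
    rw [Finset.sum_range_succ, Finset.sum_eq_zero]
    · simp [hcard]
    · intro k hk
      have : f.natDegree - k ≠ 0 := by have := Finset.mem_range.1 hk; omega
      simp [this]
  · have h1 : f.eval₂ (Int.castRingHom ℂ) (x / y) = (f.leadingCoeff : ℂ) *
        (((f.map (Int.castRingHom ℂ)).roots).map (fun z => x / y - z)).prod := by
      rw [← eval_map]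
      conv_lhs => rw [hs.eq_prod_roots]
      rw [eval_mul, eval_C, leadingCoeff_map_of_injective hinj, eq_intCast, eval_multiset_prod,
        Multiset.map_map]
      simp
    have h2 : y ^ f.natDegree * f.eval₂ (Int.castRingHom ℂ) (x / y) =
        ∑ k ∈ Finset.range (f.natDegree + 1), (f.coeff k : ℂ) * x ^ k * y ^ (f.natDegree - k) := by
      rw [eval₂_eq_sum_range, Finset.mul_sum]
      refine Finset.sum_congr rfl fun k hk => ?_
      have hk' : k ≤ f.natDegree := Nat.lt_succ_iff.1 (Finset.mem_range.1 hk)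
      obtain ⟨m, hm⟩ := Nat.exists_eq_add_of_le hk'
      rw [hm, Nat.add_sub_cancel_left, eq_intCast, div_pow, pow_add]
      field_simp
    rw [← h2, h1, mul_left_comm]
    congr 1
    rw [← hcard, ← Multiset.prod_replicate, ← Multiset.map_const', ← Multiset.prod_map_mul]
    congr 1
    refine Multiset.map_congr rfl fun z _ => ?_
    field_simp

theorem twist_map (p q : ℤ) (f : ℤ[X]) :
    (twist p q f.natDegree f).map (Int.castRingHom ℂ) = C (f.leadingCoeff : ℂ) *
      (((f.map (Int.castRingHom ℂ)).roots).map
        (fun z => C ((q : ℂ) - p * z) * X + C ((p : ℂ) + q * z))).prod := by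
  apply Polynomial.funext
  intro x
  rw [eval_map, twist_eval₂, hom_prod, eval_mul, eval_C, eval_multiset_prod, Multiset.map_map]
  congr 2
  refine Multiset.map_congr rfl fun z _ => ?_
  simp only [Function.comp_apply, eval_add, eval_mul, eval_C, eval_X]
  ring

theorem twist_measure (p q : ℤ) (f : ℤ[X]) :
    _root_.mahlerMeasure (twist p q f.natDegree f) = |(f.leadingCoeff : ℝ)| *
      (((f.map (Int.castRingHom ℂ)).roots).map
        (fun z => max ‖(q : ℂ) - p * z‖ ‖(p : ℂ) + q * z‖)).prod := by
  rw [measure_eq, twist_map, Polynomial.mahlerMeasure_mul, Polynomial.mahlerMeasure_const,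
    Complex.norm_intCast, Polynomial.prod_mahlerMeasure_eq_mahlerMeasure_prod, Multiset.map_map]
  simp only [Function.comp_def, mahler_linear]

theorem norm_fI (f : ℤ[X]) : (((fI f).norm : ℤ) : ℝ) = |(f.leadingCoeff : ℝ)| ^ 2 *
    (((f.map (Int.castRingHom ℂ)).roots).map (fun z => ‖z ^ 2 + 1‖)).prod := by
  have h1 := hom_prod f Complex.I 1
  have h2 := hom_prod f (-Complex.I) 1
  simp only [one_pow, mul_one] at h1 h2
  have hI : GaussianInt.toComplex gI = Complex.I := by simp [gI, GaussianInt.toComplex_def]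
  have e1 : GaussianInt.toComplex (fI f) =
      ∑ k ∈ Finset.range (f.natDegree + 1), (f.coeff k : ℂ) * Complex.I ^ k := by
    rw [fI, eval₂_eq_sum_range, map_sum]
    simp [hI]
  have e2 : star (GaussianInt.toComplex (fI f)) =
      ∑ k ∈ Finset.range (f.natDegree + 1), (f.coeff k : ℂ) * (-Complex.I) ^ k := by
    rw [e1, star_sum]
    refine Finset.sum_congr rfl fun k _ => ?_
    simp
  have hN : ‖GaussianInt.toComplex (fI f)‖ ^ 2 = (((fI f).norm : ℤ) : ℝ) := by
    rw [GaussianInt.intCast_real_norm, Complex.sq_norm]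
  have h3 : ‖GaussianInt.toComplex (fI f)‖ ^ 2 =
      ‖GaussianInt.toComplex (fI f)‖ * ‖star (GaussianInt.toComplex (fI f))‖ := by
    rw [norm_star]; ring
  rw [← hN, h3, ← norm_mul, e2, e1, h1, h2, mul_mul_mul_comm, ← Multiset.prod_map_mul, norm_mul,
    norm_mul, Complex.norm_intCast, ← pow_two]
  congr 1
  have := map_multiset_prod (normHom : ℂ →*₀ ℝ) ((f.map (Int.castRingHom ℂ)).roots.map
    (fun z => (Complex.I - z) * (-Complex.I - z)))
  simp only [Multiset.map_map] at this
  refine Eq.trans this ?_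
  congr 1
  refine Multiset.map_congr rfl fun z _ => ?_
  simp only [Function.comp_apply]
  change ‖(Complex.I - z) * (-Complex.I - z)‖ = ‖z ^ 2 + 1‖
  congr 1
  linear_combination -Complex.I_mul_I

theorem measure_ineq (p q : ℤ) (hq : 0 < q) (hp : p ≠ 0) (f : ℤ[X]) :
    (((|p| : ℝ) + (q : ℝ)) / 2) ^ f.natDegree * (((fI f).norm : ℤ) : ℝ) ≤
      _root_.mahlerMeasure f * _root_.mahlerMeasure (twist p q f.natDegree f) := by
  have hcard : Multiset.card (f.map (Int.castRingHom ℂ)).roots = f.natDegree := by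
    rw [← (IsAlgClosed.splits _).natDegree_eq_card_roots,
      natDegree_map_eq_of_injective (RingHom.injective_int _)]
  rw [norm_fI, twist_measure, _root_.mahlerMeasure, mul_mul_mul_comm, ← Multiset.prod_map_mul,
    mul_left_comm, ← pow_two]
  refine mul_le_mul_of_nonneg_left ?_ (by positivity)
  rw [← hcard, ← Multiset.prod_replicate, ← Multiset.map_const', ← Multiset.prod_map_mul]
  have hq' : (0 : ℝ) < q := by exact_mod_cast hq
  exact Multiset.prod_map_le_prod_map₀ _ _ (fun z _ => by positivity)
    (fun z _ => arch_complex p q hq hp z)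

theorem fI_ne_zero {α : ℂ} (hα : IsAlgebraic ℚ α) (h1 : α ≠ Complex.I) (h2 : α ≠ -Complex.I) :
    (fI (intMinpoly α)).norm ≠ 0 := by
  intro h
  rw [GaussianInt.norm_eq_zero] at h
  have hI : GaussianInt.toComplex gI = Complex.I := by simp [gI, GaussianInt.toComplex_def]
  have e1 : (intMinpoly α).eval₂ (Int.castRingHom ℂ) Complex.I = 0 := by
    have := congrArg GaussianInt.toComplex h
    rw [fI, hom_eval₂, hI, map_zero] at this
    rw [← this]; congr 1; exact RingHom.ext_int _ _
  -- the minimal polynomial of `α` vanishes at `I`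
  have hmin : minpoly ℚ α = minpoly ℚ Complex.I := by
    refine minpoly.eq_of_irreducible_of_monic (minpoly.irreducible hα.isIntegral) ?_
      (minpoly.monic hα.isIntegral)
    obtain ⟨r, s, h⟩ := intMinpoly_rel α
    rcases h with ⟨hr, hs, h⟩ | h
    · have := congrArg (aeval Complex.I) h
      rw [map_mul, map_mul, aeval_C, aeval_C, aeval_def, eval₂_map] at this
      have e3 : (intMinpoly α).eval₂ ((algebraMap ℚ ℂ).comp (Int.castRingHom ℚ)) Complex.I = 0 := by
        rw [← e1]; congr 1
      rw [e3, mul_zero, eq_comm, mul_eq_zero] at this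
      rcases this with h1 | h1
      · simp [hs] at h1
      · exact h1
    · exact absurd hα h
  have hd : minpoly ℚ α ∣ X ^ 2 + 1 := by
    rw [hmin]; apply minpoly.dvd; simp
  have h3 : α ^ 2 + 1 = 0 := by
    obtain ⟨w, hw⟩ := hd
    have := congrArg (aeval α) hw
    rw [map_mul, minpoly.aeval, zero_mul] at this
    simpa using this
  have : (α - Complex.I) * (α + Complex.I) = 0 := by
    linear_combination h3 - Complex.I_mul_I
  rcases mul_eq_zero.1 this with h | h
  · exact h1 (sub_eq_zero.1 h)
  · exact h2 (eq_neg_of_add_eq_zero_left h)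

theorem sigma_degree (p q : ℤ) (hp : p ≠ 0) {α : ℂ} (hα : IsAlgebraic ℚ α)
    (hne : (p : ℂ) * α - q ≠ 0) :
    IsAlgebraic ℚ (((q : ℂ) * α + p) / (p * α - q)) ∧
    (minpoly ℚ (((q : ℂ) * α + p) / (p * α - q))).natDegree = (minpoly ℚ α).natDegree := by
  set β := ((q : ℂ) * α + p) / (p * α - q) with hβ
  have hD : (p : ℂ) ^ 2 + q ^ 2 ≠ 0 := by
    have : (p : ℤ) ^ 2 + q ^ 2 ≠ 0 := by positivity
    exact_mod_cast this
  have hb : (p : ℂ) * β - q = (p ^ 2 + q ^ 2) / (p * α - q) := by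
    rw [hβ]; field_simp; ring
  have hαβ : α = ((q : ℂ) * β + p) / (p * β - q) := by
    rw [hb, eq_div_iff (div_ne_zero hD hne), hβ, mul_div_assoc', mul_div_assoc', div_add' _ _ _ hne]; congr 1; ring
  have mem : ∀ (K : IntermediateField ℚ ℂ) (x : ℂ), x ∈ K → ((q : ℂ) * x + p) / (p * x - q) ∈ K := by
    intro K x hx
    exact K.div_mem (K.add_mem (K.mul_mem (intCast_mem K q) hx) (intCast_mem K p))
      (K.sub_mem (K.mul_mem (intCast_mem K p) hx) (intCast_mem K q))
  have hle1 : IntermediateField.adjoin ℚ {β} ≤ IntermediateField.adjoin ℚ {α} := by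
    rw [IntermediateField.adjoin_simple_le_iff]
    exact mem _ _ (IntermediateField.mem_adjoin_simple_self ℚ α)
  have hle2 : IntermediateField.adjoin ℚ {α} ≤ IntermediateField.adjoin ℚ {β} := by
    rw [IntermediateField.adjoin_simple_le_iff, hαβ]
    exact mem _ _ (IntermediateField.mem_adjoin_simple_self ℚ β)
  have hi : ∀ m : ℤ, IsAlgebraic ℚ (m : ℂ) := fun m => isAlgebraic_intCast m
  have halg : IsAlgebraic ℚ β := by
    rw [hβ, div_eq_mul_inv]
    exact (((hi q).mul hα).add (hi p)).mul (((hi p).mul hα).sub (hi q)).inv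
  refine ⟨halg, ?_⟩
  rw [← IntermediateField.adjoin.finrank halg.isIntegral,
    ← IntermediateField.adjoin.finrank hα.isIntegral, le_antisymm hle1 hle2]

theorem twist_ne_zero (p q : ℤ) (hp : p ≠ 0) (f : ℤ[X]) (hf : f ≠ 0) :
    twist p q f.natDegree f ≠ 0 := by
  intro h
  have h1 := twist_map p q f
  rw [h, Polynomial.map_zero, eq_comm, mul_eq_zero, C_eq_zero, Int.cast_eq_zero,
    leadingCoeff_eq_zero, Multiset.prod_eq_zero_iff, Multiset.mem_map] at h1
  rcases h1 with h1 | ⟨z, -, hz⟩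
  · exact hf h1
  · have c0 := congrArg (fun P : ℂ[X] => P.eval 0) hz
    have c1 := congrArg (fun P : ℂ[X] => P.eval 1) hz
    simp only [eval_add, eval_mul, eval_C, eval_X, eval_zero] at c0 c1
    have hD : (p : ℂ) ^ 2 + q ^ 2 ≠ 0 := by
      have : (p : ℤ) ^ 2 + q ^ 2 ≠ 0 := by positivity
      exact_mod_cast this
    apply hD
    linear_combination (p - q : ℂ) * c0 + q * c1

theorem twist_degree (p q : ℤ) (n : ℕ) (f : ℤ[X]) : (twist p q n f).natDegree ≤ n := by
  rw [twist]
  refine natDegree_sum_le_of_forall_le _ _ fun k hk => ?_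
  have hk' : k ≤ n := Nat.lt_succ_iff.1 (Finset.mem_range.1 hk)
  have l1 : (C q * X + C p : ℤ[X]).natDegree ≤ 1 := natDegree_linear_le
  have l2 : (C p * X - C q : ℤ[X]).natDegree ≤ 1 := by
    rw [sub_eq_add_neg, ← C_neg]; exact natDegree_linear_le
  calc _ ≤ (C (f.coeff k) * (C q * X + C p) ^ k : ℤ[X]).natDegree
          + ((C p * X - C q) ^ (n - k) : ℤ[X]).natDegree := natDegree_mul_le
    _ ≤ k * 1 + (n - k) * 1 := by
        refine add_le_add ?_ (natDegree_pow_le_of_le _ l2)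
        exact (natDegree_C_mul_le _ _).trans (natDegree_pow_le_of_le _ l1)
    _ = n := by omega

theorem twist_root (p q : ℤ) (hp : p ≠ 0) {α : ℂ} (f : ℤ[X])
    (hf : f.eval₂ (Int.castRingHom ℂ) α = 0) (hne : (p : ℂ) * α - q ≠ 0) :
    (twist p q f.natDegree f).eval₂ (Int.castRingHom ℂ) (((q : ℂ) * α + p) / (p * α - q)) = 0 := by
  rw [twist_eval₂]
  have e1 : (q : ℂ) * (((q : ℂ) * α + p) / (p * α - q)) + p =
      α * ((p ^ 2 + q ^ 2) / (p * α - q)) := by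
    rw [mul_div_assoc', mul_div_assoc', div_add' _ _ _ hne]; congr 1; ring
  have e2 : (p : ℂ) * (((q : ℂ) * α + p) / (p * α - q)) - q =
      ((p ^ 2 + q ^ 2) / (p * α - q)) := by
    field_simp; ring
  rw [e1, e2]
  generalize ((p : ℂ) ^ 2 + q ^ 2) / (p * α - q) = w
  have : ∑ k ∈ Finset.range (f.natDegree + 1),
      (f.coeff k : ℂ) * (α * w) ^ k * w ^ (f.natDegree - k)
      = w ^ f.natDegree * f.eval₂ (Int.castRingHom ℂ) α := by
    rw [eval₂_eq_sum_range, Finset.mul_sum]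
    refine Finset.sum_congr rfl fun k hk => ?_
    have hk' : k ≤ f.natDegree := Nat.lt_succ_iff.1 (Finset.mem_range.1 hk)
    obtain ⟨m, hm⟩ := Nat.exists_eq_add_of_le hk'
    rw [hm, Nat.add_sub_cancel_left, eq_intCast]
    ring
  rw [this, hf, mul_zero]

theorem height_ineq (p q : ℤ) (hpq : IsCoprime p q) (hq : 0 < q) (hp : p ≠ 0) (α : ℂ)
    (hα : IsAlgebraic ℚ α) (h1 : α ≠ Complex.I) (h2 : α ≠ -Complex.I) :
    Real.log (((|p| : ℝ) + (q : ℝ)) / 2) ≤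
      height α + height (((q : ℂ) * α + (p : ℂ)) / ((p : ℂ) * α - (q : ℂ))) := by
  have hqR : (0 : ℝ) < q := by exact_mod_cast hq
  have hK : 0 < ((|p| : ℝ) + (q : ℝ)) / 2 := by positivity
  by_cases hne : (p : ℂ) * α - q = 0
  · rw [hne, div_zero, height_int_zero, add_zero]
    have hpC : (p : ℂ) ≠ 0 := by exact_mod_cast hp
    have : α = (q : ℂ) / p := by field_simp; linear_combination hne
    rw [this, height_rat q p hp hpq.symm]
    apply Real.log_le_log hK
    have := le_max_left |(q : ℝ)| |(p : ℝ)|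
    have := le_max_right |(q : ℝ)| |(p : ℝ)|
    have := le_abs_self (q : ℝ)
    linarith
  · obtain ⟨hβ, hdeg⟩ := sigma_degree p q hp hα hne
    have hf0 : intMinpoly α ≠ 0 := primPart_ne_zero _
    set β := ((q : ℂ) * α + p) / (p * α - q) with hβdef
    have hg0 : intMinpoly β ≠ 0 := primPart_ne_zero _
    have hfd := intMinpoly_degree hα
    obtain ⟨c, hc, hcg⟩ := eq_C_mul_intMinpoly hβ (twist p q (intMinpoly α).natDegree (intMinpoly α))
      (twist_ne_zero p q hp _ hf0) (twist_root p q hp _ (intMinpoly_root hα) hne)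
      (by rw [hdeg, ← hfd]; exact twist_degree _ _ _ _)
    have hdvd := dvd_norm_all p q c hc _ _ hp hpq hcg
    have hNpos : 0 < (fI (intMinpoly α)).norm :=
      lt_of_le_of_ne (GaussianInt.norm_nonneg _) (fI_ne_zero hα h1 h2).symm
    have hcN : |c| ≤ (fI (intMinpoly α)).norm := Int.le_of_dvd hNpos ((abs_dvd _ _).2 hdvd)
    have hcN' : |(c : ℝ)| ≤ ((fI (intMinpoly α)).norm : ℤ) := by exact_mod_cast hcN
    have hcpos : 0 < |(c : ℝ)| := abs_pos.2 (by exact_mod_cast hc)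
    have hm := measure_ineq p q hq hp (intMinpoly α)
    rw [hcg, measure_C_mul, hfd] at hm
    have hn : 0 < (minpoly ℚ α).natDegree := minpoly.natDegree_pos hα.isIntegral
    have hMf := measure_pos hf0
    have hMg := measure_pos hg0
    have hfin : (((|p| : ℝ) + (q : ℝ)) / 2) ^ (minpoly ℚ α).natDegree ≤
        _root_.mahlerMeasure (intMinpoly α) * _root_.mahlerMeasure (intMinpoly β) := by
      refine le_of_mul_le_mul_right ?_ hcpos
      calc _ ≤ _ := mul_le_mul_of_nonneg_left hcN' (by positivity)
        _ ≤ _ := hm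
        _ = _ := by ring
    have hlog := Real.log_le_log (by positivity) hfin
    rw [Real.log_pow, Real.log_mul hMf.ne' hMg.ne'] at hlog
    rw [height, height, hdeg, ← add_div, le_div_iff₀ (by exact_mod_cast hn)]
    linarith

theorem height_one : height 1 = 0 := by
  have := height_rat 1 1 one_ne_zero isCoprime_one_right
  simpa using this

theorem height_neg_one : height (-1) = 0 := by
  have := height_rat (-1) 1 one_ne_zero isCoprime_one_right
  simpa using this

theorem max_half (a b : ℝ) : max |a| |b| = (|a + b| + |a - b|) / 2 := by
  rcases le_total 0 a with ha | ha <;> rcases le_total 0 b with hb | hb <;>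
  rcases le_total 0 (a + b) with hc | hc <;> rcases le_total 0 (a - b) with hd | hd <;>
  simp only [abs_of_nonneg, abs_of_nonpos, ha, hb, hc, hd] <;>
  first
  | (rw [max_eq_left (by linarith)]; linarith)
  | (rw [max_eq_right (by linarith)]; linarith)

/-- The height of `a / b` for coprime `a`, `b`, including `b = 0` where it is the height of `∞`. -/
theorem height_frac (a b : ℤ) (hab : IsCoprime a b) :
    height ((a : ℂ) / b) = Real.log (max |(a : ℝ)| |(b : ℝ)|) := by
  by_cases hb : b = 0
  · subst hb
    have := isCoprime_zero_right.1 hab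
    rcases Int.isUnit_iff.1 this with rfl | rfl <;> simp [height_int_zero]
  · exact height_rat a b hb hab

theorem height_eq (p q : ℤ) (hpq : IsCoprime p q) (hq : 0 < q) (heven : 2 ∣ p + q) :
      height (1 : ℂ) + height (((q : ℂ) * 1 + (p : ℂ)) / ((p : ℂ) * 1 - (q : ℂ)))
          = Real.log (((|p| : ℝ) + (q : ℝ)) / 2) ∧
      height (-1 : ℂ) + height (((q : ℂ) * (-1) + (p : ℂ)) / ((p : ℂ) * (-1) - (q : ℂ)))
          = Real.log (((|p| : ℝ) + (q : ℝ)) / 2) := by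
  obtain ⟨a, ha⟩ := heven
  obtain ⟨b, hbdef⟩ : ∃ b, b = a - q := ⟨_, rfl⟩
  obtain rfl : p = a + b := by linarith
  obtain rfl : q = a - b := by linarith
  have hcop : IsCoprime a b := by
    obtain ⟨u, v, huv⟩ := hpq
    exact ⟨u + v, u - v, by rw [← huv]; ring⟩
  have hval : ((|((a + b : ℤ) : ℝ)| : ℝ) + ((a - b : ℤ) : ℝ)) / 2 = max |(a : ℝ)| |(b : ℝ)| := by
    have : (0 : ℝ) < ((a - b : ℤ) : ℝ) := by exact_mod_cast hq
    push_cast at this ⊢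
    rw [max_half, abs_of_pos this]
  rw [hval, height_one, height_neg_one, zero_add, zero_add]
  constructor
  · rw [← height_frac a b hcop]
    congr 1
    push_cast
    rw [show ((a : ℂ) - b) * 1 + (a + b) = 2 * a by ring,
      show ((a : ℂ) + b) * 1 - (a - b) = 2 * b by ring, mul_div_mul_left _ _ two_ne_zero]
  · have := height_frac b (-a) hcop.symm.neg_right
    simp only [Int.cast_neg, abs_neg] at this
    rw [max_comm] at this
    rw [← this]
    congr 1
    push_cast
    rw [show ((a : ℂ) - b) * (-1) + (a + b) = 2 * b by ring,
      show ((a : ℂ) + b) * (-1) - (a - b) = 2 * (-a) by ring, mul_div_mul_left _ _ two_ne_zero]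

/-- Row 5 of Table 1: for `σ(z) = (qz + p)/(pz - q)` (an involution interchanging `i` and
`-i`) with `p, q` coprime, `q > 0`, `p ≠ 0`: for every algebraic `α ∉ {i, -i}` one has
`h(α) + h(σ(α)) ≥ log((|p| + q)/2)`, with equality at `α = 1` and `α = -1`
when `p + q` is even. -/
theorem table1_row5 (p q : ℤ) (hpq : IsCoprime p q) (hq : 0 < q) (hp : p ≠ 0) :
    (∀ α : ℂ, IsAlgebraic ℚ α → α ≠ Complex.I → α ≠ -Complex.I →
      height α + height (((q : ℂ) * α + (p : ℂ)) / ((p : ℂ) * α - (q : ℂ)))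
        ≥ Real.log (((|p| : ℝ) + (q : ℝ)) / 2)) ∧
    (2 ∣ p + q →
      height (1 : ℂ) + height (((q : ℂ) * 1 + (p : ℂ)) / ((p : ℂ) * 1 - (q : ℂ)))
          = Real.log (((|p| : ℝ) + (q : ℝ)) / 2) ∧
      height (-1 : ℂ) + height (((q : ℂ) * (-1) + (p : ℂ)) / ((p : ℂ) * (-1) - (q : ℂ)))
          = Real.log (((|p| : ℝ) + (q : ℝ)) / 2)) := by
  exact ⟨fun α hα h1 h2 => height_ineq p q hpq hq hp α hα h1 h2, fun h => height_eq p q hpq hq h⟩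
end
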